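/- arXiv:1602.05738 — 3 statements merged into one kernel-verified Lean document; each statement's English description precedes it below -/
import Mathlib

section
/- Let F, C ⊆ ℤ² be such that F is finite and F ⊕ C = ℤ². Then there exist a set C' ⊆ ℤ² and a finite index subgroup Λ' ⊆ ℤ² such that F ⊕ C' = ℤ² and C' + Λ' = C'. (In other words, every finite subset of ℤ² that tiles ℤ² by translations also admits a periodic tiling.) -/
/-- `F ⊕ C = E` : every sum `f + c` (with `f ∈ F`, `c ∈ C`) lies in `E`, and every
element of `E` can be uniquely expressed as `f + c` with `f ∈ F` and `c ∈ C`. -/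
def TileOplus (F C E : Set (ℤ × ℤ)) : Prop :=
  (∀ f ∈ F, ∀ c ∈ C, f + c ∈ E) ∧
    ∀ e ∈ E, ∃! p : (ℤ × ℤ) × (ℤ × ℤ), p.1 ∈ F ∧ p.2 ∈ C ∧ p.1 + p.2 = e

/-!
Write `c` for the indicator function of a tiling set, so that `1_F * c = 1`, where `0 ∈ F` after a
translation. By the Frobenius endomorphism modulo primes `p > |F|`, the dilates of `F` by all
`r ≡ 1` modulo `q = |F|!` tile with the same `c`. Averaging over these dilates gives
`c + ∑ φ f = 1`, where `f` runs over `F \ {0}` and `φ f ≥ 0` has the period `q f`. Collect the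
`φ f` whose `f` span the same line `ℓ` into one function `φ ℓ`.

Modulo `1` the functions `φ ℓ` sum to zero, and distinct lines have independent periods, so each
`φ ℓ` modulo `1` is a polynomial along lattice directions transverse to `ℓ`. An irrational
coefficient would make an orbit of `φ ℓ` dense by Weyl equidistribution. Then `φ ℓ` is almost `1`
somewhere on the orbit, which forces the other functions to be small on it, and at a point where
`φ ℓ` is small and positive too, this contradicts the integrality of `∑ φ ℓ = 1 - c`.
Hence every `φ ℓ` is periodic modulo `1`, and on each coset of a suitable lattice `c` has a nonzero
period. This writes `c` as a sum of functions `C ℓ`, each with a period along `ℓ`.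

The functions `1_F * C ℓ` are `0`-`1`-valued with sum `1` and independent periods, hence they are
fully periodic. By the pigeonhole principle two slabs of `C ℓ` parallel to `ℓ` agree, and repeating
the part of `C ℓ` between them gives a fully periodic function with the same convolution with `1_F`.
Summing over `ℓ` yields the periodic tiling.
-/

open Function Filter Topology MeasureTheory fwdDiff
open scoped ComplexConjugate

section FiniteIndex

variable {G : Type*} [AddCommGroup G]

theorem exists_nsmul_mem_of_finiteIndex {H : AddSubgroup G} (hH : H.FiniteIndex) :
    ∃ n : ℕ, n ≠ 0 ∧ ∀ g, n • g ∈ H :=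
  ⟨H.index, hH.index_ne_zero, H.nsmul_index_mem⟩

variable [AddGroup.FG G]

theorem finiteIndex_of_forall_exists_nsmul_mem {H : AddSubgroup G}
    (h : ∀ g, ∃ n : ℕ, n ≠ 0 ∧ n • g ∈ H) : H.FiniteIndex := by
  have torsion : IsAddTorsion (G ⧸ H) := by
    rintro ⟨g⟩
    obtain ⟨n, hn, hg⟩ := h g
    exact isOfFinAddOrder_iff_nsmul_eq_zero.2
      ⟨n, hn.bot_lt, (QuotientAddGroup.eq_zero_iff _).2 hg⟩
  have := AddCommGroup.finite_of_fg_isAddTorsion (G ⧸ H) torsion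
  exact AddSubgroup.finiteIndex_of_finite_quotient

theorem finiteIndex_of_nsmul_le {H K : AddSubgroup G} (hH : H.FiniteIndex) {n : ℕ} (hn : n ≠ 0)
    (hHK : ∀ g ∈ H, n • g ∈ K) : K.FiniteIndex := by
  refine finiteIndex_of_forall_exists_nsmul_mem fun g => ?_
  obtain ⟨m, hm, hmH⟩ := exists_nsmul_mem_of_finiteIndex hH
  exact ⟨n * m, mul_ne_zero hn hm, mul_nsmul' g n m ▸ hHK _ (hmH g)⟩

theorem finiteIndex_sup_zmultiples_nsmul {H : AddSubgroup G} {v : G} {n : ℕ} (hn : n ≠ 0)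
    (h : (H ⊔ AddSubgroup.zmultiples v).FiniteIndex) :
    (H ⊔ AddSubgroup.zmultiples (n • v)).FiniteIndex := by
  refine finiteIndex_of_nsmul_le h hn fun g hg => ?_
  obtain ⟨a, ha, _, ⟨m, rfl⟩, rfl⟩ := AddSubgroup.mem_sup.1 hg
  rw [nsmul_add]
  exact AddSubgroup.add_mem_sup (nsmul_mem ha n) ⟨m, smul_comm m n v⟩

end FiniteIndex

section Periods

variable {G α β : Type*} [AddCommGroup G]

/-- The subgroup of all periods of a function `f`. A function on `ℤ²` is fully periodic when
`(periods f).FiniteIndex`. -/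
def periods (f : G → α) : AddSubgroup G where
  carrier := {h | Periodic f h}
  zero_mem' := periodic_with_period_zero f
  add_mem' := Periodic.add_period
  neg_mem' := Periodic.neg

theorem mem_periods {f : G → α} {h : G} : h ∈ periods f ↔ ∀ x, f (x + h) = f x := Iff.rfl

theorem periods_comp_le (g : α → β) (f : G → α) : periods f ≤ periods (g ∘ f) :=
  fun _ hh => Periodic.comp hh g

theorem apply_eq_of_sub_mem_periods {f : G → α} {x y : G} (h : x - y ∈ periods f) : f x = f y := by
  rw [← mem_periods.1 h y, add_sub_cancel]

theorem finite_range_of_finiteIndex_periods {f : G → α} (hf : (periods f).FiniteIndex) :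
    (Set.range f).Finite := by
  have : Finite (G ⧸ periods f) := AddSubgroup.finite_quotient_of_finiteIndex
  refine (Set.finite_range fun q : G ⧸ periods f => f q.out).subset ?_
  rintro _ ⟨x, rfl⟩
  exact ⟨x, apply_eq_of_sub_mem_periods (QuotientAddGroup.eq_iff_sub_mem.1 (Quotient.out_eq _))⟩

theorem finiteIndex_periods_sum {ι M : Type*} [AddCommMonoid M] [Fintype ι]
    {c : ι → G → M} (hc : ∀ i, (periods (c i)).FiniteIndex) :
    (periods (∑ i, c i)).FiniteIndex := by
  have := AddSubgroup.finiteIndex_iInf hc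
  refine AddSubgroup.finiteIndex_of_le (H := ⨅ i, periods (c i)) fun h hh x => ?_
  rw [Finset.sum_apply, Finset.sum_apply]
  exact Finset.sum_congr rfl fun i _ => mem_periods.1 (AddSubgroup.mem_iInf.1 hh i) x

/-- Translating `x` within `periods f` and `x + a` within `periods g` makes the two points meet. -/
theorem rel_of_mem_periods_sup {f : G → α} {g : G → β} {R : α → β → Prop}
    (hR : ∀ x, R (f x) (g x)) {a : G} (ha : a ∈ periods f ⊔ periods g) (x : G) :
    R (f x) (g (x + a)) := by
  obtain ⟨h, hh, k, hk, rfl⟩ := AddSubgroup.mem_sup.1 ha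
  rw [← mem_periods.1 hh x, ← add_assoc, hk]
  exact hR _

end Periods

section ExclusionLattice

variable {G ι M : Type*} [AddCommGroup G]

/-- The subgroup of translations `a` that are, for every pair `i ≠ j`, a sum of a period of `φ i`
and a period of `φ j`. Along such `a`, a bound on `∑ i, φ i` lets a large value of one `φ i` at `x`
exclude large values of the others at `x + a`. -/
def exclusionLattice (φ : ι → G → M) : AddSubgroup G :=
  ⨅ p : {p : ι × ι // p.1 ≠ p.2}, periods (φ p.1.1) ⊔ periods (φ p.1.2)

theorem exclusionLattice_le (φ : ι → G → M) {i j : ι} (hij : i ≠ j) :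
    exclusionLattice φ ≤ periods (φ i) ⊔ periods (φ j) :=
  iInf_le (fun p : {p : ι × ι // p.1 ≠ p.2} => periods (φ p.1.1) ⊔ periods (φ p.1.2)) ⟨(i, j), hij⟩

theorem finiteIndex_exclusionLattice [Finite ι] {φ : ι → G → M}
    (h : Pairwise fun i j => (periods (φ i) ⊔ periods (φ j)).FiniteIndex) :
    (exclusionLattice φ).FiniteIndex :=
  AddSubgroup.finiteIndex_iInf fun p => h p.2

variable [Fintype ι] [AddCommMonoid M] [PartialOrder M] [IsOrderedCancelAddMonoid M]
  {φ : ι → G → M} {b : M} {a : G}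

theorem add_le_of_mem_exclusionLattice (hφ : ∀ i x, 0 ≤ φ i x) (hsum : ∀ x, ∑ i, φ i x ≤ b)
    (ha : a ∈ exclusionLattice φ) {i j : ι} (hij : i ≠ j) (x : G) : φ i x + φ j (x + a) ≤ b :=
  rel_of_mem_periods_sup (R := fun s t => s + t ≤ b)
    (fun y => (Finset.add_le_sum (f := fun k => φ k y) (fun k _ => hφ k y) (Finset.mem_univ i)
      (Finset.mem_univ j) hij).trans (hsum y))
    (exclusionLattice_le φ hij ha) x

theorem eq_zero_of_mem_exclusionLattice (hφ : ∀ i x, 0 ≤ φ i x) (hsum : ∀ x, ∑ i, φ i x ≤ b)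
    (ha : a ∈ exclusionLattice φ) {i j : ι} (hij : i ≠ j) {x : G} (hx : φ i x = b) :
    φ j (x + a) = 0 := by
  have key := add_le_of_mem_exclusionLattice hφ hsum ha hij x
  rw [hx] at key
  exact le_antisymm (nonpos_of_add_le_right key) (hφ j _)

theorem finiteIndex_periods_of_sum_eq_one {e : ι → G → ℕ} (hsum : ∀ x, ∑ i, e i x = 1)
    (h : Pairwise fun i j => (periods (e i) ⊔ periods (e j)).FiniteIndex) (i : ι) :
    (periods (e i)).FiniteIndex := by
  have le_one (x : G) : e i x ≤ 1 :=
    hsum x ▸ Finset.single_le_sum (f := fun j => e j x) (fun _ _ => zero_le) (Finset.mem_univ i)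
  have mono (x a : G) (ha : a ∈ exclusionLattice e) : e i x ≤ e i (x + a) := by
    rcases Nat.le_one_iff_eq_zero_or_eq_one.1 (le_one x) with hx | hx
    · exact hx ▸ zero_le
    · rw [hx, ← hsum (x + a), Fintype.sum_eq_single i fun j hj => eq_zero_of_mem_exclusionLattice
        (fun _ _ => zero_le) (fun y => (hsum y).le) ha hj.symm hx]
  have := finiteIndex_exclusionLattice h
  refine AddSubgroup.finiteIndex_of_le (H := exclusionLattice e) fun a ha x =>
    le_antisymm ?_ (mono x a ha)
  simpa only [add_neg_cancel_right] using mono (x + a) (-a) (neg_mem ha)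

end ExclusionLattice

section ForwardDifference

variable {G A : Type*} [AddCommGroup G] [AddCommGroup A]

theorem commute_fwdDiff (v w : G) :
    Function.Commute (fwdDiff v : (G → A) → G → A) (fwdDiff w) := fun f => by
  ext x
  simp only [fwdDiff, add_right_comm x v w]
  abel

theorem fwdDiff_eq_zero_iff {f : G → A} {v : G} : Δ_[v] f = 0 ↔ v ∈ periods f := by
  simp only [funext_iff, fwdDiff, Pi.zero_apply, sub_eq_zero, mem_periods]

theorem periods_le_periods_fwdDiff (f : G → A) (v : G) : periods f ≤ periods (Δ_[v] f) :=
  fun a ha x => by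
    simp only [fwdDiff, add_right_comm x a v, mem_periods.1 ha]

theorem periods_le_periods_fwdDiff_iter (f : G → A) (v : G) (n : ℕ) :
    periods f ≤ periods ((Δ_[v])^[n] f) := by
  induction n with
  | zero => exact le_rfl
  | succ n ih =>
    rw [iterate_succ_apply']
    exact ih.trans (periods_le_periods_fwdDiff _ v)

theorem fwdDiff_add_of_mem_periods {f : G → A} {a : G} (ha : a ∈ periods f) (b : G) :
    Δ_[a + b] f = Δ_[b] f := by
  ext x
  simp only [fwdDiff, ← add_assoc, add_right_comm x a b, mem_periods.1 ha]

/-- Each period of a summand turns the difference in direction `v` into one that kills this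
summand, so the number of summands bounds the degree of `f` along `v`. -/
theorem fwdDiff_iter_card_sum_eq_zero {ι : Type*} {s : Finset ι} {f : G → A} {g : ι → G → A}
    (hf : f = ∑ j ∈ s, g j) {v : G} (hv : ∀ j ∈ s, v ∈ periods f ⊔ periods (g j)) :
    (Δ_[v])^[s.card] f = 0 := by
  classical
  induction s using Finset.induction_on generalizing f g with
  | empty => exact hf
  | insert j s hj ih =>
    obtain ⟨a, ha, b, hb, hab⟩ := AddSubgroup.mem_sup.1 (hv j (Finset.mem_insert_self j s))
    rw [Finset.card_insert_of_notMem hj, iterate_succ_apply, ← hab,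
      fwdDiff_add_of_mem_periods ha, hab]
    refine ih (g := fun k => Δ_[b] (g k)) ?_ fun k hk => ?_
    · rw [hf, Finset.sum_insert hj, fwdDiff_add, fwdDiff_eq_zero_iff.2 hb, zero_add,
        fwdDiff_finsetSum]
    · exact sup_le_sup (periods_le_periods_fwdDiff f b) (periods_le_periods_fwdDiff _ b)
        (hv k (Finset.mem_insert_of_mem hk))

theorem fwdDiff_nsmul_of_mem_periods {f : G → A} {w : G} (hw : w ∈ periods (Δ_[w] f)) (n : ℕ) :
    Δ_[n • w] f = n • Δ_[w] f := by
  induction n with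
  | zero => ext x; simp [fwdDiff]
  | succ n ih =>
    ext x
    have step : f (x + n • w + w) - f (x + n • w) = Δ_[w] f x :=
      mem_periods.1 (nsmul_mem hw n) x
    rw [succ_nsmul (Δ_[w] f), ← ih, Pi.add_apply, ← step]
    simp only [fwdDiff, succ_nsmul, ← add_assoc]
    abel

theorem fwdDiff_iter_nsmul_of_fwdDiff_iter_eq_zero {w : G} (n s : ℕ) {f : G → A}
    (hf : (Δ_[w])^[s + 1] f = 0) : (Δ_[n • w])^[s] f = n ^ s • (Δ_[w])^[s] f := by
  induction s generalizing f with
  | zero => simp only [iterate_zero, id, pow_zero, one_smul]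
  | succ s ih =>
    have degree_one : Δ_[w] ((Δ_[n • w])^[s] f) = n ^ s • (Δ_[w])^[s + 1] f := by
      rw [← ((commute_fwdDiff (n • w) w).iterate_left s).eq f]
      exact ih hf
    have period : w ∈ periods (Δ_[w] ((Δ_[n • w])^[s] f)) := by
      rw [← fwdDiff_eq_zero_iff, degree_one, fwdDiff_const_smul, ← iterate_succ_apply' (Δ_[w]),
        hf, smul_zero]
    rw [iterate_succ_apply', fwdDiff_nsmul_of_mem_periods period, degree_one, smul_smul,
      ← pow_succ']

end ForwardDifference

section Mean

variable {E E₂ : Type*} [NormedAddCommGroup E] [NormedSpace ℝ E] [NormedAddCommGroup E₂]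
  [NormedSpace ℝ E₂]

/-- The Cesàro averages of the sequence `a` converge to `l` along a fixed free ultrafilter on `ℕ`.
Using an ultrafilter instead of `atTop` gives every bounded sequence a mean. -/
def HasMean (a : ℕ → E) (l : E) : Prop :=
  Tendsto (fun N : ℕ => (N : ℝ)⁻¹ • ∑ n ∈ Finset.range N, a n) (hyperfilter ℕ : Filter ℕ) (𝓝 l)

variable {a b : ℕ → E} {l m : E} {B : ℝ}

theorem norm_average_range_le (h : ∀ n, ‖a n‖ ≤ B) (N : ℕ) :
    ‖(N : ℝ)⁻¹ • ∑ n ∈ Finset.range N, a n‖ ≤ B := by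
  rcases N.eq_zero_or_pos with rfl | hN
  · simpa using (norm_nonneg _).trans (h 0)
  · rw [norm_smul, norm_inv, Real.norm_natCast, inv_mul_le_iff₀ (Nat.cast_pos.2 hN)]
    simpa using norm_sum_le_of_le (Finset.range N) fun n _ => h n

namespace HasMean

theorem exists_of_norm_le [ProperSpace E] (h : ∀ n, ‖a n‖ ≤ B) : ∃ l, HasMean a l := by
  obtain ⟨l, -, hl⟩ := (isCompact_closedBall (0 : E) B).ultrafilter_le_nhds
    ((hyperfilter ℕ).map fun N : ℕ => (N : ℝ)⁻¹ • ∑ n ∈ Finset.range N, a n)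
    (le_principal_iff.2 <| Eventually.of_forall (f := (hyperfilter ℕ : Filter ℕ)) fun N =>
      mem_closedBall_zero_iff.2 (norm_average_range_le h N))
  exact ⟨l, hl⟩

theorem unique (h : HasMean a l) (h' : HasMean a m) : l = m :=
  tendsto_nhds_unique h h'

theorem map (T : E →L[ℝ] E₂) (h : HasMean a l) : HasMean (fun n => T (a n)) (T l) :=
  ((T.continuous.tendsto l).comp h).congr fun N => by simp only [comp_apply, map_smul, map_sum]

theorem const (l : E) : HasMean (fun _ => l) l :=
  (tendsto_const_nhds.cesaro_smul).mono_left Nat.hyperfilter_le_atTop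

theorem add (h : HasMean a l) (h' : HasMean b m) : HasMean (fun n => a n + b n) (l + m) :=
  (Tendsto.add h h').congr fun N => by rw [Finset.sum_add_distrib, smul_add]

theorem sum {ι : Type*} {s : Finset ι} {a : ι → ℕ → E} {l : ι → E}
    (h : ∀ i ∈ s, HasMean (a i) (l i)) : HasMean (fun n => ∑ i ∈ s, a i n) (∑ i ∈ s, l i) :=
  (tendsto_finsetSum s h).congr fun N => by rw [Finset.sum_comm, Finset.smul_sum]

theorem le {a b : ℕ → ℝ} {l m : ℝ} (h : HasMean a l) (h' : HasMean b m) (hab : ∀ n, a n ≤ b n) :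
    l ≤ m :=
  le_of_tendsto_of_tendsto' h h' fun N =>
    smul_le_smul_of_nonneg_left (Finset.sum_le_sum fun n _ => hab n) (by positivity)

theorem sq_norm_le {r : ℝ} (h : HasMean a l) (h' : HasMean (fun n => ‖a n‖ ^ 2) r) :
    ‖l‖ ^ 2 ≤ r := by
  refine le_of_tendsto_of_tendsto' (h.norm.pow 2) h' fun N => ?_
  rcases N.eq_zero_or_pos with rfl | hN
  · simp
  · rw [norm_smul, norm_inv, Real.norm_natCast, smul_eq_mul, mul_pow, sq (N : ℝ)⁻¹, mul_assoc]
    gcongr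
    rw [inv_mul_le_iff₀ (Nat.cast_pos.2 hN)]
    calc ‖∑ n ∈ Finset.range N, a n‖ ^ 2
        ≤ (∑ n ∈ Finset.range N, ‖a n‖) ^ 2 := by gcongr; exact norm_sum_le _ _
      _ ≤ (Finset.range N).card * ∑ n ∈ Finset.range N, ‖a n‖ ^ 2 := sq_sum_le_card_mul_sum_sq
      _ = N * ∑ n ∈ Finset.range N, ‖a n‖ ^ 2 := by rw [Finset.card_range]

theorem of_approx (h : ∀ ε > 0, ∃ (b : ℕ → E) (m : E), HasMean b m ∧ (∀ n, ‖a n - b n‖ ≤ ε) ∧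
    ‖m - l‖ ≤ ε) : HasMean a l := by
  refine Metric.tendsto_nhds.2 fun ε hε => ?_
  obtain ⟨b, m, hb, hab, hml⟩ := h (ε / 4) (by positivity)
  filter_upwards [Metric.tendsto_nhds.1 hb (ε / 4) (by positivity)] with N hN
  have hab' := norm_average_range_le hab N
  rw [Finset.sum_sub_distrib, smul_sub, ← dist_eq_norm] at hab'
  rw [← dist_eq_norm] at hml
  linarith [dist_triangle4 ((N : ℝ)⁻¹ • ∑ n ∈ Finset.range N, a n)
    ((N : ℝ)⁻¹ • ∑ n ∈ Finset.range N, b n) m l]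

theorem comp_succ (h : HasMean a l) (hB : ∀ n, ‖a n‖ ≤ B) : HasMean (fun n => a (n + 1)) l := by
  have boundary : Tendsto (fun N : ℕ => (N : ℝ)⁻¹ • (a N - a 0)) atTop (𝓝 0) :=
    tendsto_inv_atTop_nhds_zero_nat.zero_smul_isBoundedUnder_le
      (isBoundedUnder_of ⟨B + B, fun N => norm_sub_le_of_le (hB N) (hB 0)⟩)
  have shifted := Tendsto.add h (boundary.mono_left Nat.hyperfilter_le_atTop)
  rw [add_zero] at shifted
  refine shifted.congr fun N => ?_
  rw [← Finset.sum_range_sub, ← smul_add, ← Finset.sum_add_distrib]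
  simp only [add_sub_cancel]

theorem comp_add (h : HasMean a l) (hB : ∀ n, ‖a n‖ ≤ B) (k : ℕ) :
    HasMean (fun n => a (n + k)) l := by
  induction k with
  | zero => exact h
  | succ k ih =>
    simpa only [Nat.add_right_comm, ← add_assoc] using ih.comp_succ fun n => hB (n + k)

end HasMean

theorem hasMean_mul_conj_of_lt {u : ℕ → ℂ} (hu : ∀ n, ‖u n‖ = 1)
    (h : ∀ k, k ≠ 0 → HasMean (fun n => u (n + k) * conj (u n)) 0) {j k : ℕ} (hkj : k < j) :
    HasMean (fun n => u (n + j) * conj (u (n + k))) 0 := by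
  have shifted := (h (j - k) (Nat.sub_pos_of_lt hkj).ne').comp_add (B := 1)
    (fun n => by rw [norm_mul, Complex.norm_conj, hu, hu, one_mul]) k
  simpa only [add_assoc, Nat.add_sub_cancel' hkj.le] using shifted

theorem hasMean_mul_conj {u : ℕ → ℂ} (hu : ∀ n, ‖u n‖ = 1)
    (h : ∀ k, k ≠ 0 → HasMean (fun n => u (n + k) * conj (u n)) 0) (j k : ℕ) :
    HasMean (fun n => u (n + j) * conj (u (n + k))) (if j = k then 1 else 0) := by
  rcases lt_trichotomy j k with hjk | rfl | hkj
  · simpa [hjk.ne, mul_comm] using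
      (hasMean_mul_conj_of_lt hu h hjk).map Complex.conjCLE.toContinuousLinearMap
  · simpa [Complex.mul_conj', hu] using HasMean.const (1 : ℂ)
  · simpa [hkj.ne'] using hasMean_mul_conj_of_lt hu h hkj

/-- The van der Corput trick: a window sum of length `H` has mean `H • l`, whereas the mean of its
squared norm is only `H`. -/
theorem hasMean_zero_of_hasMean_mul_conj {u : ℕ → ℂ} (hu : ∀ n, ‖u n‖ = 1)
    (h : ∀ k, k ≠ 0 → HasMean (fun n => u (n + k) * conj (u n)) 0) : HasMean u 0 := by
  obtain ⟨l, hl⟩ := HasMean.exists_of_norm_le fun n => (hu n).le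
  have window_mean (H : ℕ) :
      HasMean (fun n => ∑ j ∈ Finset.range H, u (n + j)) (∑ _j ∈ Finset.range H, l) :=
    HasMean.sum fun j _ => hl.comp_add (fun n => (hu n).le) j
  have window_sq_mean (H : ℕ) :
      HasMean (fun n => ‖∑ j ∈ Finset.range H, u (n + j)‖ ^ 2) (H : ℝ) := by
    have expanded := (HasMean.sum fun j (_ : j ∈ Finset.range H) =>
      HasMean.sum fun k (_ : k ∈ Finset.range H) => hasMean_mul_conj hu h j k).map Complex.reCLM
    convert expanded using 1
    · funext n
      rw [← Finset.sum_mul_sum, ← map_sum, Complex.mul_conj', Complex.reCLM_apply]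
      norm_cast
    · simp +contextual
  have bound (H : ℕ) : (H * ‖l‖) ^ 2 ≤ H := by
    simpa [norm_mul] using (window_mean H).sq_norm_le (window_sq_mean H)
  suffices l = 0 from this ▸ hl
  by_contra hne
  obtain ⟨H, hH⟩ := exists_nat_gt (1 / ‖l‖ ^ 2)
  have hl_pos : 0 < ‖l‖ ^ 2 := by positivity
  rw [div_lt_iff₀ hl_pos] at hH
  have hH_pos : (0 : ℝ) < H := pos_of_mul_pos_left (one_pos.trans hH) hl_pos.le
  nlinarith [bound H, hH_pos]

end Mean

section Equidistribution

theorem integral_fourier_eq_zero {k : ℤ} (hk : k ≠ 0) :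
    ∫ x : UnitAddCircle, fourier k x ∂AddCircle.haarAddCircle = 0 :=
  integral_eq_zero_of_add_right_eq_neg (fourier_add_half_inv_index hk one_pos)

variable {v : ℕ → UnitAddCircle}

theorem hasMean_integral_of_hasMean_fourier
    (hv : ∀ k : ℤ, k ≠ 0 → HasMean (fun n => fourier k (v n)) 0) (g : C(UnitAddCircle, ℂ)) :
    HasMean (fun n => g (v n)) (∫ x, g x ∂AddCircle.haarAddCircle) := by
  have integrable (g : C(UnitAddCircle, ℂ)) : Integrable g AddCircle.haarAddCircle :=
    g.continuous.integrable_of_hasCompactSupport (HasCompactSupport.of_compactSpace _)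
  have trig_poly {g : C(UnitAddCircle, ℂ)} (hg : g ∈ Submodule.span ℂ (Set.range (@fourier 1))) :
      HasMean (fun n => g (v n)) (∫ x, g x ∂AddCircle.haarAddCircle) := by
    induction hg using Submodule.span_induction with
    | mem g hg =>
      obtain ⟨k, rfl⟩ := hg
      rcases eq_or_ne k 0 with rfl | hk
      · simpa using HasMean.const (1 : ℂ)
      · exact integral_fourier_eq_zero hk ▸ hv k hk
    | zero => simpa using HasMean.const (0 : ℂ)
    | add f g _ _ hf hg =>
      exact integral_add (integrable f) (integrable g) ▸ hf.add hg
    | smul c g _ hg =>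
      exact integral_smul c g ▸ hg.map (ContinuousLinearMap.mul ℝ ℂ c)
  refine HasMean.of_approx fun ε hε => ?_
  have hg : g ∈ closure (Submodule.span ℂ (Set.range (@fourier 1)) : Set C(UnitAddCircle, ℂ)) := by
    rw [← Submodule.topologicalClosure_coe, span_fourier_closure_eq_top]
    trivial
  obtain ⟨p, hp, hgp⟩ := Metric.mem_closure_iff.1 hg ε hε
  have close (x : UnitAddCircle) : ‖g x - p x‖ ≤ ε := by
    rw [← dist_eq_norm]
    exact (ContinuousMap.dist_apply_le_dist x).trans hgp.le
  refine ⟨fun n => p (v n), _, trig_poly hp, fun n => close _, ?_⟩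
  rw [norm_sub_rev, ← integral_sub (integrable g) (integrable p)]
  simpa using norm_integral_le_of_norm_le_const (μ := AddCircle.haarAddCircle)
    (Eventually.of_forall close)

theorem denseRange_of_hasMean_fourier
    (hv : ∀ k : ℤ, k ≠ 0 → HasMean (fun n => fourier k (v n)) 0) : DenseRange v := by
  intro θ
  by_contra hθ
  let d : UnitAddCircle → ℝ := fun x => Metric.infDist x (Set.range v)
  have d_continuous : Continuous d := Metric.continuous_infDist_pt _
  have integral_pos : 0 < ∫ x, d x ∂AddCircle.haarAddCircle :=
    d_continuous.integral_pos_of_hasCompactSupport_nonneg_nonzero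
      (HasCompactSupport.of_compactSpace _) (fun _ => Metric.infDist_nonneg)
      (mt (Metric.mem_closure_iff_infDist_zero (Set.range_nonempty v)).2 hθ)
  have mean := hasMean_integral_of_hasMean_fourier hv
    ⟨fun x => (d x : ℂ), Complex.continuous_ofReal.comp d_continuous⟩
  have d_zero (n : ℕ) : d (v n) = 0 := Metric.infDist_zero_of_mem (Set.mem_range_self n)
  simp only [ContinuousMap.coe_mk, d_zero, Complex.ofReal_zero] at mean
  exact integral_pos.ne' <| Complex.ofReal_eq_zero.1 <|
    integral_ofReal.symm.trans (mean.unique (HasMean.const 0))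

end Equidistribution

section PolynomialOrbit

variable {G : Type*} [AddCommGroup G] {f : G → UnitAddCircle} {w : G}

theorem hasMean_toCircle_of_fwdDiff {x : G} (hw : w ∈ periods (Δ_[w] f))
    (hα : Δ_[w] f x ≠ 0) :
    HasMean (fun n : ℕ => (AddCircle.toCircle (f (x + n • w)) : ℂ)) 0 := by
  have rotate (n : ℕ) : (AddCircle.toCircle (f (x + (n + 1) • w)) : ℂ) =
      AddCircle.toCircle (Δ_[w] f x) * AddCircle.toCircle (f (x + n • w)) := by
    have step : f (x + n • w + w) - f (x + n • w) = Δ_[w] f x := mem_periods.1 (nsmul_mem hw n) x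
    rw [succ_nsmul, ← add_assoc, ← step, ← Circle.coe_mul, ← AddCircle.toCircle_add,
      sub_add_cancel]
  have rotation_ne_one : (AddCircle.toCircle (Δ_[w] f x) : ℂ) ≠ 1 := fun h =>
    hα <| AddCircle.injective_toCircle one_ne_zero <|
      (Circle.coe_eq_one.1 h).trans AddCircle.toCircle_zero.symm
  obtain ⟨l, hl⟩ := HasMean.exists_of_norm_le
    (a := fun n : ℕ => (AddCircle.toCircle (f (x + n • w)) : ℂ)) fun n => (Circle.norm_coe _).le
  have rotated := hl.comp_succ fun n => (Circle.norm_coe _).le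
  simp only [rotate] at rotated
  have fixed : l = AddCircle.toCircle (Δ_[w] f x) * l :=
    rotated.unique (hl.map (ContinuousLinearMap.mul ℝ ℂ (AddCircle.toCircle (Δ_[w] f x) : ℂ)))
  suffices l = 0 from this ▸ hl
  exact (mul_left_eq_self₀.1 fixed.symm).resolve_left rotation_ne_one

theorem hasMean_toCircle_of_fwdDiff_iter {s : ℕ} {x : G} (hw : w ∈ periods ((Δ_[w])^[s + 1] f))
    (hα : ¬IsOfFinAddOrder ((Δ_[w])^[s + 1] f x)) :
    HasMean (fun n : ℕ => (AddCircle.toCircle (f (x + n • w)) : ℂ)) 0 := by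
  induction s generalizing f with
  | zero =>
    refine hasMean_toCircle_of_fwdDiff hw fun h => hα ?_
    rw [zero_add, iterate_one, h]
    exact IsOfFinAddOrder.zero
  | succ s ih =>
    refine hasMean_zero_of_hasMean_mul_conj (fun n => Circle.norm_coe _) fun k hk => ?_
    have leading : (Δ_[w])^[s + 1] (Δ_[k • w] f) = k • (Δ_[w])^[s + 2] f := by
      rw [((commute_fwdDiff w (k • w)).iterate_left _).eq f, iterate_succ_apply' _ (s + 1)]
      refine fwdDiff_nsmul_of_mem_periods ?_ k
      rwa [← iterate_succ_apply' (Δ_[w])]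
    have correlation := ih (f := Δ_[k • w] f) (leading ▸ periods_comp_le (k • ·) _ hw)
      (by rw [leading, Pi.smul_apply, isOfFinAddOrder_nsmul]; tauto)
    convert correlation using 2 with n
    rw [fwdDiff, sub_eq_add_neg, AddCircle.toCircle_add, AddCircle.toCircle_neg, Circle.coe_mul,
      Circle.coe_inv_eq_conj, add_smul, add_assoc]

theorem denseRange_of_fwdDiff_iter {s : ℕ} {x : G} (hw : w ∈ periods ((Δ_[w])^[s + 1] f))
    (hα : ¬IsOfFinAddOrder ((Δ_[w])^[s + 1] f x)) : DenseRange fun n : ℕ => f (x + n • w) := by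
  refine denseRange_of_hasMean_fourier fun k hk => ?_
  have scaled : (Δ_[w])^[s + 1] (k • f) = k • (Δ_[w])^[s + 1] f := fwdDiff_iter_const_smul ..
  refine hasMean_toCircle_of_fwdDiff_iter (f := k • f) (s := s)
    (scaled ▸ periods_comp_le (k • ·) _ hw) fun torsion => hα ?_
  obtain ⟨m, hm, h⟩ := isOfFinAddOrder_iff_zsmul_eq_zero.1 (scaled ▸ torsion)
  exact isOfFinAddOrder_iff_zsmul_eq_zero.2 ⟨m * k, mul_ne_zero hm hk, (mul_smul ..).trans h⟩

theorem exists_nsmul_eq_zero_of_finite_range {A B : Type*} [AddMonoid B] {α : A → B}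
    (hα : (Set.range α).Finite) (torsion : ∀ x, IsOfFinAddOrder (α x)) :
    ∃ n : ℕ, n ≠ 0 ∧ ∀ x, n • α x = 0 := by
  refine ⟨∏ y ∈ hα.toFinset, addOrderOf y, Finset.prod_ne_zero_iff.2 fun y hy => ?_, fun x => ?_⟩
  · obtain ⟨x, rfl⟩ := hα.mem_toFinset.1 hy
    exact (torsion x).addOrderOf_pos.ne'
  · exact addOrderOf_dvd_iff_nsmul_eq_zero.1
      (Finset.dvd_prod_of_mem _ (hα.mem_toFinset.2 (Set.mem_range_self x)))

/-- The top difference `α` along `v` has torsion values, since otherwise an orbit of `f` along `v`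
would be dense; passing to a multiple of `v` then kills `α` and lowers the degree. -/
theorem finiteIndex_periods_of_not_denseRange [AddGroup.FG G] {v : G} {s : ℕ}
    (hf : (Δ_[v])^[s + 1] f = 0) (hv : (periods f ⊔ AddSubgroup.zmultiples v).FiniteIndex)
    (not_dense : ∀ x, ¬DenseRange fun n : ℕ => f (x + n • v)) : (periods f).FiniteIndex := by
  induction s generalizing v with
  | zero =>
    rwa [sup_eq_left.2 (AddSubgroup.zmultiples_le.2 (fwdDiff_eq_zero_iff.1 hf))] at hv
  | succ s ih =>
    have v_mem : v ∈ periods ((Δ_[v])^[s + 1] f) := by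
      rwa [← fwdDiff_eq_zero_iff, ← iterate_succ_apply' (Δ_[v])]
    have α_finite : (Set.range ((Δ_[v])^[s + 1] f)).Finite :=
      finite_range_of_finiteIndex_periods <| AddSubgroup.finiteIndex_of_le <|
        sup_le (periods_le_periods_fwdDiff_iter f v _) (AddSubgroup.zmultiples_le.2 v_mem)
    obtain ⟨n, hn, hα⟩ := exists_nsmul_eq_zero_of_finite_range α_finite fun x =>
      not_not.1 fun h => not_dense x (denseRange_of_fwdDiff_iter v_mem h)
    refine ih (v := n • v) ?_ (finiteIndex_sup_zmultiples_nsmul hn hv) fun x dense => not_dense x ?_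
    · rw [fwdDiff_iter_nsmul_of_fwdDiff_iter_eq_zero n (s + 1) hf, pow_succ, mul_smul,
        show n • (Δ_[v])^[s + 1] f = 0 from funext hα, smul_zero]
    · refine dense.mono ?_
      rintro _ ⟨m, rfl⟩
      exact ⟨m * n, by simp only [mul_smul]⟩

end PolynomialOrbit

section Dilation

variable {G ι : Type*} [AddCommGroup G]

/-- The action of the group algebra on functions by convolution. It turns an identity between
sums of translates into an identity between commuting operators. -/
noncomputable def groupAlgebraAction (R G : Type*) [CommSemiring R] [AddCommGroup G] :
    AddMonoidAlgebra R G →ₐ[R] Module.End R (G → R) :=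
  AddMonoidAlgebra.lift R (Module.End R (G → R)) G
    { toFun := fun g => LinearMap.funLeft R R (· - g.toAdd)
      map_one' := by ext; simp
      map_mul' := fun a b => by ext; simp [sub_sub] }

theorem groupAlgebraAction_sum_single {R : Type*} [CommSemiring R] (s : Finset ι) (g : ι → G)
    (c : G → R) (x : G) :
    groupAlgebraAction R G (∑ i ∈ s, AddMonoidAlgebra.single (g i) 1) c x =
      ∑ i ∈ s, c (x - g i) := by
  simp [groupAlgebraAction]

theorem sum_apply_sub_prime_nsmul {p : ℕ} [Fact p.Prime] {s : Finset ι} {g : ι → G}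
    {c : G → ZMod p} (h : ∀ x, ∑ i ∈ s, c (x - g i) = 1) (x : G) :
    ∑ i ∈ s, c (x - p • g i) = (s.card : ZMod p) ^ (p - 1) := by
  have : CharP (AddMonoidAlgebra (ZMod p) G) p :=
    charP_of_injective_algebraMap (algebraMap (ZMod p) _).injective p
  set T := ∑ i ∈ s, AddMonoidAlgebra.single (g i) (1 : ZMod p) with hT
  have frobenius : T ^ p = ∑ i ∈ s, AddMonoidAlgebra.single (p • g i) 1 := by
    simp only [hT, sum_pow_char, AddMonoidAlgebra.single_pow, one_pow]
  have iterate (k : ℕ) :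
      groupAlgebraAction (ZMod p) G (T ^ (k + 1)) c = fun _ => (s.card : ZMod p) ^ k := by
    induction k with
    | zero =>
      rw [zero_add, pow_one, pow_zero]
      exact funext fun y => (groupAlgebraAction_sum_single s g c y).trans (h y)
    | succ k ih =>
      rw [pow_succ', map_mul, Module.End.mul_apply, ih]
      funext y
      rw [hT, groupAlgebraAction_sum_single, Finset.sum_const, nsmul_eq_mul, pow_succ']
  have power := congrFun (iterate (p - 1)) x
  rwa [Nat.sub_add_cancel (Fact.out : p.Prime).one_le, frobenius,
    groupAlgebraAction_sum_single] at power

variable {s : Finset ι} {g : ι → G} {c : G → ℕ}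

theorem apply_le_one_of_sum_eq_one (h : ∀ x, ∑ i ∈ s, c (x - g i) = 1) (x : G) : c x ≤ 1 := by
  obtain ⟨i, hi⟩ : s.Nonempty := Finset.nonempty_of_sum_ne_zero ((h 0).trans_ne one_ne_zero)
  rw [← h (x + g i)]
  simpa only [add_sub_cancel_right] using
    Finset.single_le_sum (f := fun j => c (x + g i - g j)) (fun _ _ => zero_le) hi

theorem sum_sub_prime_nsmul_eq_one (h : ∀ x, ∑ i ∈ s, c (x - g i) = 1) {p : ℕ} (hp : p.Prime)
    (hsp : s.card < p) (x : G) : ∑ i ∈ s, c (x - p • g i) = 1 := by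
  have : Fact p.Prime := ⟨hp⟩
  have s_nonempty : s.Nonempty := Finset.nonempty_of_sum_ne_zero ((h 0).trans_ne one_ne_zero)
  have card_ne_zero : (s.card : ZMod p) ≠ 0 := by
    rw [Ne, ZMod.natCast_eq_zero_iff]
    exact Nat.not_dvd_of_pos_of_lt s_nonempty.card_pos hsp
  have mod_p : ((∑ i ∈ s, c (x - p • g i) : ℕ) : ZMod p) = (1 : ℕ) := by
    rw [Nat.cast_sum, Nat.cast_one, ← ZMod.pow_card_sub_one_eq_one card_ne_zero]
    refine sum_apply_sub_prime_nsmul (c := fun y => (c y : ZMod p)) (fun y => ?_) x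
    exact_mod_cast congrArg (Nat.cast : ℕ → ZMod p) (h y)
  have le_card : ∑ i ∈ s, c (x - p • g i) ≤ s.card := by
    simpa using Finset.sum_le_card_nsmul s _ 1 fun i _ => apply_le_one_of_sum_eq_one h _
  exact ((ZMod.natCast_eq_natCast_iff _ _ p).1 mod_p).eq_of_lt_of_lt (le_card.trans_lt hsp)
    hp.one_lt

theorem sum_sub_nsmul_eq_one {r : ℕ} (hr : r ≠ 0) (hprime : ∀ p : ℕ, p.Prime → p ∣ r → s.card < p)
    (h : ∀ x, ∑ i ∈ s, c (x - g i) = 1) (x : G) : ∑ i ∈ s, c (x - r • g i) = 1 := by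
  induction r using Nat.recOnMul generalizing g x with
  | zero => exact absurd rfl hr
  | one => simpa only [one_smul] using h x
  | prime p hp => exact sum_sub_prime_nsmul_eq_one h hp (hprime p hp dvd_rfl) x
  | mul a b iha ihb =>
    simpa only [mul_smul] using iha (left_ne_zero_of_mul hr)
      (fun p hp hpa => hprime p hp (hpa.mul_right b))
      (ihb (right_ne_zero_of_mul hr) (fun p hp hpb => hprime p hp (hpb.mul_left a)) h) x

theorem sum_sub_one_add_factorial_mul_nsmul_eq_one (h : ∀ x, ∑ i ∈ s, c (x - g i) = 1) (k : ℕ)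
    (x : G) : ∑ i ∈ s, c (x - (1 + s.card.factorial * k) • g i) = 1 := by
  refine sum_sub_nsmul_eq_one (by omega) (fun p hp hpr => ?_) h x
  by_contra! hps
  have p_dvd_one : p ∣ 1 :=
    (Nat.dvd_add_left ((hp.dvd_factorial.2 hps).mul_right k)).1 hpr
  exact hp.one_lt.ne' (Nat.dvd_one.1 p_dvd_one)

end Dilation

section TileSum

variable {G M : Type*} [AddCommGroup G] [AddCommMonoid M]

/-- The convolution `1_F * c`. The set `C` is a tiling by `F` exactly when `tileSum F 1_C = 1`. -/
def tileSum (F : Finset G) (c : G → M) (x : G) : M :=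
  ∑ f ∈ F, c (x - f)

theorem periods_le_periods_tileSum (F : Finset G) (c : G → M) :
    periods c ≤ periods (tileSum F c) := fun h hc x =>
  Finset.sum_congr rfl fun f _ => by rw [add_sub_right_comm, mem_periods.1 hc]

theorem tileSum_sum {ι : Type*} (F : Finset G) (s : Finset ι) (c : ι → G → M) :
    tileSum F (∑ i ∈ s, c i) = ∑ i ∈ s, tileSum F (c i) := by
  ext x
  simp only [tileSum, Finset.sum_apply]
  exact Finset.sum_comm

theorem tileSum_map_subRight (F : Finset G) (a : G) (c : G → M) (x : G) :
    tileSum (F.map (Equiv.subRight a).toEmbedding) c x = tileSum F c (x + a) := by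
  simp only [tileSum, Finset.sum_map, Equiv.coe_toEmbedding, Equiv.subRight_apply,
    sub_sub_eq_add_sub]

variable {F : Finset G} {c : G → ℕ}

theorem apply_le_one_of_tileSum_eq_one (h : tileSum F c = 1) (x : G) : c x ≤ 1 :=
  apply_le_one_of_sum_eq_one (g := id) (congrFun h) x

/-- The term of `f` is the mean of the dilated translates `c (x - (1 + q k) • f)` over `k`. -/
theorem exists_periodic_add_sum_eq_one [DecidableEq G] (h0 : 0 ∈ F) (h : tileSum F c = 1) :
    ∃ φ : G → G → ℝ, (∀ f x, 0 ≤ φ f x) ∧ (∀ f, F.card.factorial • f ∈ periods (φ f)) ∧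
      ∀ x, (c x : ℝ) + ∑ f ∈ F.erase 0, φ f x = 1 := by
  have bounded (f x : G) (k : ℕ) : ‖(c (x - (1 + F.card.factorial * k) • f) : ℝ)‖ ≤ 1 := by
    rw [Real.norm_natCast]
    exact_mod_cast apply_le_one_of_tileSum_eq_one h _
  choose φ hφ using fun f x => HasMean.exists_of_norm_le (bounded f x)
  refine ⟨φ, fun f x => (HasMean.const 0).le (hφ f x) fun _ => Nat.cast_nonneg _,
    fun f x => (hφ f (x + F.card.factorial • f)).comp_succ (bounded f _) |>.unique ?_,
    fun x => ?_⟩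
  · convert hφ f x using 4 with k
    rw [mul_add, mul_one, add_comm _ F.card.factorial, add_left_comm, add_smul]
    abel
  · have φ_zero : φ 0 x = c x := (hφ 0 x).unique (by simpa using HasMean.const (c x : ℝ))
    rw [← φ_zero, Finset.add_sum_erase F (φ · x) h0]
    refine (HasMean.sum fun f _ => hφ f x).unique ?_
    convert HasMean.const (1 : ℝ) using 2 with k
    exact_mod_cast sum_sub_one_add_factorial_mul_nsmul_eq_one (g := id) (congrFun h) k x

end TileSum

section WeakPeriodicity

theorem eq_of_coe_unitAddCircle_eq {s t : ℝ} (h : (s : UnitAddCircle) = t) (hst : |s - t| < 1) :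
    s = t := by
  obtain ⟨n, hn⟩ := AddSubgroup.mem_zmultiples_iff.1 (QuotientAddGroup.eq_iff_sub_mem.1 h)
  rw [zsmul_one] at hn
  have hn0 : n = 0 := Int.abs_lt_one_iff.1 (by rw [← hn] at hst; exact_mod_cast hst)
  rw [← sub_eq_zero, ← hn, hn0, Int.cast_zero]

theorem exists_mem_Ioo_of_denseRange_coe {α : Type*} {u : α → ℝ}
    (h : DenseRange fun n => (u n : UnitAddCircle)) (hu : ∀ n, u n ∈ Set.Icc 0 1) {a b : ℝ}
    (ha : 0 ≤ a) (hab : a < b) (hb : b ≤ 1) : ∃ n, u n ∈ Set.Ioo a b := by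
  obtain ⟨n, t, ht, htn⟩ := h.exists_mem_open
    (QuotientAddGroup.isOpenMap_coe (N := AddSubgroup.zmultiples (1 : ℝ)) _ isOpen_Ioo)
    ((Set.nonempty_Ioo.2 hab).image _)
  refine ⟨n, eq_of_coe_unitAddCircle_eq htn (abs_lt.2 ⟨?_, ?_⟩) ▸ ht⟩
  · linarith [ht.1, (hu n).2]
  · linarith [ht.2, (hu n).1]

variable {G ι : Type*} [Fintype ι] {φ : ι → G → ℝ} {c : G → ℕ}

theorem sum_le_one_of_add_sum_eq_one (hsum : ∀ x, (c x : ℝ) + ∑ i, φ i x = 1) (x : G) :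
    ∑ i, φ i x ≤ 1 :=
  (le_add_of_nonneg_left (Nat.cast_nonneg _)).trans_eq (hsum x)

theorem le_one_of_add_sum_eq_one (hφ : ∀ i x, 0 ≤ φ i x)
    (hsum : ∀ x, (c x : ℝ) + ∑ i, φ i x = 1) (i : ι) (x : G) : φ i x ≤ 1 :=
  (Finset.single_le_sum (f := fun j => φ j x) (fun j _ => hφ j x) (Finset.mem_univ i)).trans
    (sum_le_one_of_add_sum_eq_one hsum x)

variable [AddCommGroup G]

/-- A dense orbit of `φ i` mod `1` has a value close to `1`, which makes all other `φ j` small on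
the orbit. At a point where `φ i` is itself small and positive the sum lies strictly between `0`
and `1`, so it cannot be `1 - c`. -/
theorem not_denseRange_coe_of_mem_exclusionLattice (hφ : ∀ i x, 0 ≤ φ i x)
    (hsum : ∀ x, (c x : ℝ) + ∑ i, φ i x = 1) (i : ι) {v : G} (hv : v ∈ exclusionLattice φ)
    (x : G) : ¬DenseRange fun n : ℕ => (φ i (x + n • v) : UnitAddCircle) := by
  intro dense
  have : Nonempty ι := ⟨i⟩
  have card_pos : (0 : ℝ) < Fintype.card ι := mod_cast Fintype.card_pos
  have inv_le_one : (Fintype.card ι : ℝ)⁻¹ ≤ 1 := Nat.cast_inv_le_one _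
  have inv_pos : 0 < (Fintype.card ι : ℝ)⁻¹ := inv_pos.2 card_pos
  have unit (n : ℕ) : φ i (x + n • v) ∈ Set.Icc 0 1 :=
    ⟨hφ i _, le_one_of_add_sum_eq_one hφ hsum i _⟩
  obtain ⟨m, large, -⟩ := exists_mem_Ioo_of_denseRange_coe dense unit
    (sub_nonneg.2 inv_le_one) (sub_lt_self 1 inv_pos) le_rfl
  obtain ⟨n, pos, small⟩ := exists_mem_Ioo_of_denseRange_coe dense unit le_rfl inv_pos inv_le_one
  have all_small (j : ι) : φ j (x + n • v) < (Fintype.card ι : ℝ)⁻¹ := by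
    rcases eq_or_ne i j with rfl | hij
    · exact small
    · have := add_le_of_mem_exclusionLattice hφ (sum_le_one_of_add_sum_eq_one hsum)
        (sub_mem (nsmul_mem hv n) (nsmul_mem hv m)) hij (x + m • v)
      rw [add_add_sub_cancel] at this
      linarith
  have sum_lt_one : ∑ j, φ j (x + n • v) < 1 := by
    refine (Finset.sum_lt_sum_of_nonempty Finset.univ_nonempty fun j _ => all_small j).trans_eq ?_
    rw [Finset.sum_const, Finset.card_univ, nsmul_eq_mul, mul_inv_cancel₀ card_pos.ne']
  have sum_pos : 0 < ∑ j, φ j (x + n • v) :=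
    Finset.sum_pos' (fun j _ => hφ j _) ⟨i, Finset.mem_univ i, pos⟩
  have c_pos : (0 : ℝ) < c (x + n • v) := by linarith [hsum (x + n • v)]
  have c_lt_one : (c (x + n • v) : ℝ) < 1 := by linarith [hsum (x + n • v)]
  norm_cast at c_pos c_lt_one
  omega

theorem finiteIndex_periods_coe_of_add_sum_eq_one [AddGroup.FG G] (hφ : ∀ i x, 0 ≤ φ i x)
    (hsum : ∀ x, (c x : ℝ) + ∑ i, φ i x = 1)
    (hpair : Pairwise fun i j => (periods (φ i) ⊔ periods (φ j)).FiniteIndex) {i : ι} {v : G}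
    (hv : (periods (φ i) ⊔ AddSubgroup.zmultiples v).FiniteIndex) :
    (periods fun x => (φ i x : UnitAddCircle)).FiniteIndex := by
  classical
  let ψ (j : ι) (x : G) : UnitAddCircle := φ j x
  have le_periods (j : ι) : periods (φ j) ≤ periods (ψ j) := periods_comp_le _ _
  obtain ⟨n, hn, hnv⟩ := exists_nsmul_mem_of_finiteIndex (finiteIndex_exclusionLattice hpair)
  have ψ_eq : ψ i = ∑ j ∈ Finset.univ.erase i, -ψ j := by
    ext x
    have integral : ∑ j, ψ j x = 0 := by
      have key : ∑ j, φ j x = (1 - c x : ℤ) • (1 : ℝ) := by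
        rw [zsmul_one, Int.cast_sub, Int.cast_one, Int.cast_natCast, ← hsum x, add_sub_cancel_left]
      refine (map_sum (QuotientAddGroup.mk' (AddSubgroup.zmultiples (1 : ℝ))) _ _).symm.trans ?_
      exact (QuotientAddGroup.eq_zero_iff _).2 (key ▸ AddSubgroup.zsmul_mem_zmultiples _ _)
    simp only [Finset.sum_apply, Pi.neg_apply, Finset.sum_neg_distrib]
    rw [← Finset.add_sum_erase _ _ (Finset.mem_univ i)] at integral
    exact eq_neg_of_add_eq_zero_left integral
  have degree : (Δ_[n • v])^[(Finset.univ.erase i).card] (ψ i) = 0 := by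
    refine fwdDiff_iter_card_sum_eq_zero ψ_eq fun j hj => ?_
    refine sup_le_sup (le_periods i) ((le_periods j).trans (periods_comp_le (- ·) _)) ?_
    exact exclusionLattice_le φ (Finset.ne_of_mem_erase hj).symm (hnv v)
  refine finiteIndex_periods_of_not_denseRange (v := n • v) (s := (Finset.univ.erase i).card) ?_ ?_
    (not_denseRange_coe_of_mem_exclusionLattice hφ hsum i (hnv v))
  · rw [iterate_succ_apply']
    exact (congrArg _ degree).trans (fwdDiff_const _ _)
  · have := finiteIndex_sup_zmultiples_nsmul hn hv
    exact AddSubgroup.finiteIndex_of_le (sup_le_sup_right (le_periods i) _)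

theorem exists_periods_on_coset [Nonempty ι] (hφ : ∀ i x, 0 ≤ φ i x)
    (hsum : ∀ x, (c x : ℝ) + ∑ i, φ i x = 1) {Λ : AddSubgroup G} (hΛ : Λ ≤ exclusionLattice φ)
    (hΛ' : ∀ i, Λ ≤ periods fun x => (φ i x : UnitAddCircle)) (q : G ⧸ Λ) :
    ∃ i, ∀ x : G, x = q → ∀ p ∈ Λ ⊓ periods (φ i), c (x + p) = c x := by
  have sub_mem_of_mem {x y : G} (hx : x = q) (hy : y = q) : x - y ∈ Λ :=
    QuotientAddGroup.eq_iff_sub_mem.1 (hx.trans hy.symm)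
  have coe_add {x p : G} (hx : x = q) (hp : p ∈ Λ) : (x + p : G) = q := by
    rw [QuotientAddGroup.mk_add_of_mem _ hp, hx]
  by_cases hone : ∃ i, ∃ y : G, y = q ∧ φ i y = 1
  · obtain ⟨i, y, hy, hyi⟩ := hone
    have c_eq {x : G} (hx : x = q) : (c x : ℝ) = 1 - φ i x := by
      rw [← hsum x, Fintype.sum_eq_single i, add_sub_cancel_right]
      intro j hj
      have := eq_zero_of_mem_exclusionLattice hφ (sum_le_one_of_add_sum_eq_one hsum)
        (hΛ (sub_mem_of_mem hx hy)) hj.symm hyi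
      rwa [add_sub_cancel] at this
    refine ⟨i, fun x hx p hp => ?_⟩
    rw [← @Nat.cast_inj ℝ, c_eq hx, c_eq (coe_add hx hp.1), mem_periods.1 hp.2]
  · push Not at hone
    have lt_one {x : G} (hx : x = q) (i : ι) : φ i x < 1 :=
      (le_one_of_add_sum_eq_one hφ hsum i x).lt_of_ne (hone i x hx)
    refine ⟨Classical.arbitrary ι, fun x hx p hp => ?_⟩
    have φ_eq (i : ι) : φ i (x + p) = φ i x := by
      refine eq_of_coe_unitAddCircle_eq (mem_periods.1 (hΛ' i hp.1) x) (abs_lt.2 ⟨?_, ?_⟩)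
      · linarith [lt_one hx i, hφ i (x + p)]
      · linarith [lt_one (coe_add hx hp.1) i, hφ i x]
    have := (hsum (x + p)).trans (hsum x).symm
    simp only [φ_eq] at this
    exact_mod_cast add_right_cancel this

theorem exists_sum_eq_of_forall_coset {M : Type*} [AddCommMonoid M] {c : G → M}
    {Λ : AddSubgroup G} {K : ι → AddSubgroup G} (hK : ∀ i, K i ≤ Λ)
    (h : ∀ q : G ⧸ Λ, ∃ i, ∀ x : G, x = q → ∀ p ∈ K i, c (x + p) = c x) :
    ∃ C : ι → G → M, c = ∑ i, C i ∧ ∀ i, K i ≤ periods (C i) := by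
  classical
  choose σ hσ using h
  refine ⟨fun i x => if σ x = i then c x else 0, ?_, fun i p hp x => ?_⟩
  · ext x
    rw [Finset.sum_apply, Finset.sum_ite_eq, if_pos (Finset.mem_univ _)]
  · simp only [QuotientAddGroup.mk_add_of_mem x (hK i hp)]
    exact if_ctx_congr Iff.rfl (fun hi => hσ _ x rfl p (hi ▸ hp)) fun _ => rfl

theorem exists_decomposition_of_add_sum_eq_one [AddGroup.FG G] [Nonempty ι]
    (hφ : ∀ i x, 0 ≤ φ i x) (hsum : ∀ x, (c x : ℝ) + ∑ i, φ i x = 1)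
    (hpair : Pairwise fun i j => (periods (φ i) ⊔ periods (φ j)).FiniteIndex)
    (hline : ∀ i, ∃ v, (periods (φ i) ⊔ AddSubgroup.zmultiples v).FiniteIndex) :
    ∃ Λ : AddSubgroup G, Λ.FiniteIndex ∧
      ∃ C : ι → G → ℕ, c = ∑ i, C i ∧ ∀ i, Λ ⊓ periods (φ i) ≤ periods (C i) := by
  let Λ := exclusionLattice φ ⊓ ⨅ i, periods fun x => (φ i x : UnitAddCircle)
  have index_exclusion := finiteIndex_exclusionLattice hpair
  have index_coe := AddSubgroup.finiteIndex_iInf fun i =>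
    finiteIndex_periods_coe_of_add_sum_eq_one hφ hsum hpair (hline i).choose_spec
  have on_coset (q : G ⧸ Λ) := exists_periods_on_coset hφ hsum inf_le_left
    (fun i => inf_le_right.trans (iInf_le _ i)) q
  exact ⟨Λ, inferInstance, exists_sum_eq_of_forall_coset (fun _ => inf_le_left) on_coset⟩

end WeakPeriodicity

section Wrap

variable {G α : Type*} [AddCommGroup G] (l : G →+ ℤ) {w : G} (hw : 0 < l w) (t : ℤ)

/-- The `w`-periodic function that agrees with `c` on the slab `t ≤ l x < t + l w`. -/
noncomputable def wrap (c : G → α) (x : G) : α :=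
  c (x - toIcoDiv hw t (l x) • w)

theorem mem_periods_wrap (c : G → α) : w ∈ periods (wrap l hw t c) := fun x => by
  rw [wrap, wrap, map_add, toIcoDiv_add_right, add_zsmul, one_zsmul, add_sub_add_right_eq_sub]

theorem inf_ker_le_periods_wrap (c : G → α) : periods c ⊓ l.ker ≤ periods (wrap l hw t c) :=
  fun h hh x => by
    rw [wrap, wrap, map_add, AddMonoidHom.mem_ker.1 hh.2, add_zero, add_sub_right_comm,
      mem_periods.1 hh.1]

theorem inf_ker_sup_zmultiples_le_periods_wrap (c : G → α) :
    periods c ⊓ l.ker ⊔ AddSubgroup.zmultiples w ≤ periods (wrap l hw t c) :=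
  sup_le (inf_ker_le_periods_wrap l hw t c)
    (AddSubgroup.zmultiples_le_of_mem (mem_periods_wrap l hw t c))

theorem wrap_apply_of_mem_Ico (c : G → α) {x : G} (hx : l x ∈ Set.Ico t (t + l w)) :
    wrap l hw t c x = c x := by
  rw [wrap, toIcoDiv_eq_of_sub_zsmul_mem_Ico hw (n := 0) (by rwa [zero_zsmul, sub_zero]),
    zero_zsmul, sub_zero]

theorem finite_setOf_le_periods {K : AddSubgroup G} (hK : K.FiniteIndex) {s : Set α}
    (hs : s.Finite) : {f : G → α | K ≤ periods f ∧ ∀ x, f x ∈ s}.Finite := by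
  have : Finite (G ⧸ K) := AddSubgroup.finite_quotient_of_finiteIndex
  refine ((Set.Finite.pi' (ι := G ⧸ K) fun _ => hs).image fun g (x : G) => g x).subset ?_
  rintro f ⟨hf, hfs⟩
  exact ⟨fun q => f q.out, fun q => hfs _, funext fun x => apply_eq_of_sub_mem_periods
    (hf (QuotientAddGroup.eq_iff_sub_mem.1 (Quotient.out_eq _)))⟩

/-- The slabs of width `l w` carry only finitely many patterns, so two of them agree. -/
theorem exists_nsmul_period_on_slab {c : G → α} (hc : (Set.range c).Finite) (hw : 0 < l w)
    (hK : (periods c ⊓ l.ker ⊔ AddSubgroup.zmultiples w).FiniteIndex) :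
    ∃ d : ℕ, d ≠ 0 ∧ ∃ t, ∀ y, l y ∈ Set.Ico t (t + l w) → c (y + d • w) = c y := by
  let pattern (k : ℕ) : G → α := wrap l hw 0 fun x => c (x + k • w)
  have le_periods (k : ℕ) : periods c ≤ periods fun x => c (x + k • w) := fun h hh x => by
    simp only [add_right_comm x h, mem_periods.1 hh]
  have pattern_mem (k : ℕ) : pattern k ∈
      {f | periods c ⊓ l.ker ⊔ AddSubgroup.zmultiples w ≤ periods f ∧ ∀ x, f x ∈ Set.range c} :=
    ⟨(sup_le_sup_right (inf_le_inf_right _ (le_periods k)) _).trans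
      (inf_ker_sup_zmultiples_le_periods_wrap l hw 0 _), fun _ => Set.mem_range_self _⟩
  obtain ⟨i, j, hij, heq⟩ := (finite_setOf_le_periods hK hc).exists_lt_map_eq_of_forall_mem
    pattern_mem
  refine ⟨j - i, (Nat.sub_pos_of_lt hij).ne', i * l w, fun y hy => ?_⟩
  have hx : l (y - i • w) ∈ Set.Ico 0 (0 + l w) := by
    rw [map_sub, map_nsmul, nsmul_eq_mul]
    constructor <;> linarith [hy.1, hy.2]
  have agree := congrFun heq (y - i • w)
  simp only [pattern, wrap_apply_of_mem_Ico l hw 0 _ hx] at agree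
  rw [sub_add_cancel, sub_add_eq_add_sub, add_sub_assoc, sub_eq_add_neg (j • w),
    ← sub_nsmul w hij.le] at agree
  exact agree.symm

variable {M : Type*} [AddCommMonoid M] {F : Finset G} {c : G → M}

/-- By periodicity of both sides in direction `w` it suffices to compare them in one slab, where
every value that enters is read off from `c` itself. -/
theorem tileSum_wrap {B : ℤ} (hc : ∀ y, l y ∈ Set.Ico t (t + 2 * B) → c (y + w) = c y)
    (hB : 2 * B ≤ l w) (hF : ∀ f ∈ F, |l f| ≤ B) (hwF : w ∈ periods (tileSum F c)) :
    tileSum F (wrap l hw t c) = tileSum F c := by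
  have agree (y : G) (hy : l y ∈ Set.Ico t (t + l w + 2 * B)) : wrap l hw t c y = c y := by
    rcases lt_or_ge (l y) (t + l w) with h | h
    · exact wrap_apply_of_mem_Ico l hw t c ⟨hy.1, h⟩
    · have ly : l (y - w) ∈ Set.Ico t (t + 2 * B) := by
        rw [map_sub]
        exact ⟨by linarith, by linarith [hy.2]⟩
      rw [← sub_add_cancel y w, mem_periods.1 (mem_periods_wrap l hw t c), hc _ ly]
      exact wrap_apply_of_mem_Ico l hw t c ⟨ly.1, by linarith [ly.2]⟩
  have agree_tileSum (y : G) (hy : l y ∈ Set.Ico (t + B) (t + B + l w)) :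
      tileSum F (wrap l hw t c) y = tileSum F c y := by
    refine Finset.sum_congr rfl fun f hf => agree _ ?_
    have := abs_le.1 (hF f hf)
    rw [map_sub]
    constructor <;> linarith [hy.1, hy.2]
  ext x
  let n := toIcoDiv hw (t + B) (l x)
  have period := periods_le_periods_tileSum F _ (mem_periods_wrap l hw t c)
  rw [← mem_periods.1 (neg_mem (zsmul_mem period n)) x,
    ← mem_periods.1 (neg_mem (zsmul_mem hwF n)) x, ← sub_eq_add_neg]
  refine agree_tileSum _ ?_
  rw [map_sub, map_zsmul]
  exact sub_toIcoDiv_zsmul_mem_Ico hw _ _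

theorem exists_finiteIndex_periods_tileSum_eq [AddGroup.FG G] (hc : (Set.range c).Finite)
    (hcF : (periods (tileSum F c)).FiniteIndex) {v : G} (hv : 0 < l v)
    (hK : (periods c ⊓ l.ker ⊔ AddSubgroup.zmultiples v).FiniteIndex) :
    ∃ c' : G → M, (periods c').FiniteIndex ∧ tileSum F c' = tileSum F c := by
  obtain ⟨n, hn, hnF⟩ := exists_nsmul_mem_of_finiteIndex hcF
  let B : ℕ := ∑ f ∈ F, (l f).natAbs
  have le_B (f : G) (hf : f ∈ F) : |l f| ≤ B := by
    rw [Int.abs_eq_natAbs, Nat.cast_le]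
    exact Finset.single_le_sum (f := fun g => (l g).natAbs) (fun _ _ => Nat.zero_le _) hf
  let u : G := ((2 * B + 1) * n) • v
  have hu : 2 * B + 1 ≤ l u := by
    rw [map_nsmul, nsmul_eq_mul]
    push_cast
    have : (1 : ℤ) ≤ n * l v := one_le_mul_of_one_le_of_one_le (by omega) hv
    nlinarith
  have index_u := finiteIndex_sup_zmultiples_nsmul (n := (2 * B + 1) * n) (by positivity) hK
  obtain ⟨d, hd, t, period⟩ := exists_nsmul_period_on_slab l hc (by linarith) index_u
  have hdu : l u ≤ l (d • u) := by
    rw [map_nsmul l d u, nsmul_eq_mul]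
    exact le_mul_of_one_le_left (by linarith) (mod_cast Nat.one_le_iff_ne_zero.2 hd)
  have hw : 0 < l (d • u) := by linarith
  have index_wrap := finiteIndex_sup_zmultiples_nsmul hd index_u
  refine ⟨wrap l hw t c,
    AddSubgroup.finiteIndex_of_le (inf_ker_sup_zmultiples_le_periods_wrap l hw t c),
    tileSum_wrap l hw t (fun y hy => period y ⟨hy.1, by linarith [hy.2]⟩) (by linarith) le_B ?_⟩
  exact nsmul_mem (by simpa only [u, mul_nsmul'] using nsmul_mem (hnF v) _) d

end Wrap

section Lattice

/-- The homomorphism `x ↦ det (h, x)`. For `h ≠ 0` its kernel is the set of integer points on the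
line through `h`. -/
def detHom (h : ℤ × ℤ) : ℤ × ℤ →+ ℤ :=
  h.1 • AddMonoidHom.snd ℤ ℤ - h.2 • AddMonoidHom.fst ℤ ℤ

theorem detHom_apply (h x : ℤ × ℤ) : detHom h x = h.1 * x.2 - h.2 * x.1 := rfl

theorem detHom_self (h : ℤ × ℤ) : detHom h h = 0 := by
  rw [detHom_apply, mul_comm, sub_self]

theorem detHom_swap (h k : ℤ × ℤ) : detHom h k = -detHom k h := by
  simp only [detHom_apply]
  ring

theorem detHom_cramer (h k x : ℤ × ℤ) :
    detHom h k • x = detHom x k • h + detHom h x • k := by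
  ext <;> simp only [detHom_apply, Prod.smul_fst, Prod.smul_snd, Prod.fst_add, Prod.snd_add,
    smul_eq_mul] <;> ring

theorem exists_detHom_pos {h : ℤ × ℤ} (hh : h ≠ 0) : ∃ v, 0 < detHom h v := by
  refine ⟨(-h.2, h.1), ?_⟩
  have norm_sq : detHom h (-h.2, h.1) = h.1 * h.1 + h.2 * h.2 := by
    rw [detHom_apply, mul_neg, sub_neg_eq_add]
  rw [norm_sq]
  refine (add_nonneg (mul_self_nonneg _) (mul_self_nonneg _)).lt_of_ne fun h0 => hh ?_
  exact Prod.ext_iff.2 (mul_self_add_mul_self_eq_zero.1 h0.symm)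

theorem finiteIndex_sup_of_detHom_ne_zero {H K : AddSubgroup (ℤ × ℤ)} {h k : ℤ × ℤ} (hh : h ∈ H)
    (hk : k ∈ K) (hhk : detHom h k ≠ 0) : (H ⊔ K).FiniteIndex := by
  refine finiteIndex_of_forall_exists_nsmul_mem fun x => ?_
  refine ⟨(detHom h k).natAbs, Int.natAbs_ne_zero.2 hhk, ?_⟩
  have cramer : detHom h k • x ∈ H ⊔ K :=
    detHom_cramer h k x ▸ AddSubgroup.add_mem_sup (zsmul_mem hh _) (zsmul_mem hk _)
  rw [← natCast_zsmul]
  rcases Int.natAbs_eq (detHom h k) with hn | hn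
  · rwa [← hn]
  · rwa [← neg_mem_iff, ← neg_zsmul, ← hn]

theorem ker_detHom_eq {h k : ℤ × ℤ} (hh : h ≠ 0) (hk : k ≠ 0) (hhk : detHom h k = 0) :
    (detHom h).ker = (detHom k).ker := by
  have ker_le {h k : ℤ × ℤ} (hh : h ≠ 0) (hhk : detHom h k = 0) :
      (detHom h).ker ≤ (detHom k).ker := fun x hx => by
    have cramer := detHom_cramer h k x
    rw [hhk, AddMonoidHom.mem_ker.1 hx, zero_smul, zero_smul, add_zero] at cramer
    rw [AddMonoidHom.mem_ker, detHom_swap, neg_eq_zero]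
    exact (smul_eq_zero.1 cramer.symm).resolve_right hh
  exact le_antisymm (ker_le hh hhk) (ker_le hk (by rw [detHom_swap, hhk, neg_zero]))

theorem exists_ne_zero_mem_of_forall_mem_ker_detHom {ι : Type*} {s : Finset ι}
    {H : ι → AddSubgroup (ℤ × ℤ)} {u : ℤ × ℤ} (hu : u ≠ 0)
    (hs : ∀ i ∈ s, ∃ h ≠ 0, h ∈ (detHom u).ker ⊓ H i) :
    ∃ k ≠ 0, k ∈ (detHom u).ker ∧ ∀ i ∈ s, k ∈ H i := by
  classical
  induction s using Finset.induction_on with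
  | empty => exact ⟨u, hu, detHom_self u, by simp⟩
  | insert i s _ ih =>
    obtain ⟨k, hk, hku, hks⟩ := ih fun j hj => hs j (Finset.mem_insert_of_mem hj)
    obtain ⟨h, hh, hhu, hi⟩ := hs i (Finset.mem_insert_self i s)
    obtain ⟨v, hv⟩ := exists_detHom_pos hh
    have hhk : detHom h k = 0 := AddMonoidHom.mem_ker.1 (ker_detHom_eq hu hh hhu ▸ hku)
    have common : detHom h v • k = detHom k v • h := by
      rw [detHom_cramer h v k, hhk, zero_smul, add_zero]
    refine ⟨detHom h v • k, smul_ne_zero hv.ne' hk, AddSubgroup.zsmul_mem _ hku _,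
      (Finset.forall_mem_insert _ _ _).2
        ⟨common ▸ AddSubgroup.zsmul_mem _ hi _, fun j hj => zsmul_mem (hks j hj) _⟩⟩

open Classical in
/-- The lines through the origin spanned by the vectors of `S`, as subgroups of `ℤ²`. -/
noncomputable def spannedLines (S : Finset (ℤ × ℤ)) : Finset (AddSubgroup (ℤ × ℤ)) :=
  S.image fun f => (detHom f).ker

open Classical in
theorem sum_spannedLines {M : Type*} [AddCommMonoid M] (S : Finset (ℤ × ℤ)) (g : ℤ × ℤ → M) :
    ∑ ℓ : spannedLines S, ∑ f ∈ S with (detHom f).ker = ℓ, g f = ∑ f ∈ S, g f := by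
  rw [Finset.sum_coe_sort (spannedLines S) fun ℓ => ∑ f ∈ S with (detHom f).ker = ℓ, g f]
  exact Finset.sum_fiberwise_of_maps_to (fun f hf => Finset.mem_image_of_mem _ hf) g

theorem exists_common_period_on_spannedLines {α : Type*} {S : Finset (ℤ × ℤ)}
    (hS : ∀ f ∈ S, f ≠ 0) {φ : ℤ × ℤ → ℤ × ℤ → α}
    (hφ : ∀ f ∈ S, ∃ n : ℕ, n ≠ 0 ∧ n • f ∈ periods (φ f)) :
    ∃ k : spannedLines S → ℤ × ℤ, (∀ ℓ, k ℓ ≠ 0) ∧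
      (Pairwise fun ℓ ℓ' => detHom (k ℓ) (k ℓ') ≠ 0) ∧
      ∀ ℓ : spannedLines S, ∀ f ∈ S, (detHom f).ker = ℓ → k ℓ ∈ periods (φ f) := by
  classical
  have on_line (ℓ : spannedLines S) : ∃ k ≠ 0, (detHom k).ker = ℓ ∧
      ∀ f ∈ S, (detHom f).ker = ℓ → k ∈ periods (φ f) := by
    obtain ⟨_, hℓ⟩ := ℓ
    obtain ⟨u, hu, rfl⟩ := Finset.mem_image.1 hℓ
    obtain ⟨k, hk, hku, hkφ⟩ := exists_ne_zero_mem_of_forall_mem_ker_detHom (hS u hu)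
      (s := S.filter fun f => (detHom f).ker = (detHom u).ker) (H := fun f => periods (φ f)) <| by
        intro f hf
        obtain ⟨hfS, hfu⟩ := Finset.mem_filter.1 hf
        obtain ⟨n, hn, hnf⟩ := hφ f hfS
        exact ⟨n • f, smul_ne_zero hn (hS f hfS), nsmul_mem (hfu ▸ detHom_self f) n, hnf⟩
    exact ⟨k, hk, (ker_detHom_eq (hS u hu) hk hku).symm,
      fun f hf hfu => hkφ f (Finset.mem_filter.2 ⟨hf, hfu⟩)⟩
  choose k hk hker hkφ using on_line
  refine ⟨k, hk, fun ℓ ℓ' hne h0 => hne (Subtype.ext ?_), hkφ⟩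
  rw [← hker ℓ, ← hker ℓ', ker_detHom_eq (hk ℓ) (hk ℓ') h0]

end Lattice

section PeriodicTiling

theorem exists_decomposition_by_lines {S : Finset (ℤ × ℤ)} (hS : S.Nonempty)
    (hS0 : ∀ f ∈ S, f ≠ 0) {c : ℤ × ℤ → ℕ} {φ : ℤ × ℤ → ℤ × ℤ → ℝ} (hφ : ∀ f x, 0 ≤ φ f x)
    (hφS : ∀ f ∈ S, ∃ n : ℕ, n ≠ 0 ∧ n • f ∈ periods (φ f))
    (hsum : ∀ x, (c x : ℝ) + ∑ f ∈ S, φ f x = 1) :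
    ∃ (C : spannedLines S → ℤ × ℤ → ℕ) (k : spannedLines S → ℤ × ℤ), c = ∑ ℓ, C ℓ ∧
      (∀ ℓ, k ℓ ∈ periods (C ℓ)) ∧ (∀ ℓ, k ℓ ≠ 0) ∧
      Pairwise fun ℓ ℓ' => detHom (k ℓ) (k ℓ') ≠ 0 := by
  classical
  obtain ⟨k, hk, hdet, hkφ⟩ := exists_common_period_on_spannedLines hS0 hφS
  let Φ (ℓ : spannedLines S) (x : ℤ × ℤ) : ℝ := ∑ f ∈ S with (detHom f).ker = ℓ, φ f x
  have period (ℓ) : k ℓ ∈ periods (Φ ℓ) := fun x =>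
    Finset.sum_congr rfl fun f hf =>
      mem_periods.1 (hkφ ℓ f (Finset.mem_filter.1 hf).1 (Finset.mem_filter.1 hf).2) x
  have sum_lines (x : ℤ × ℤ) : (c x : ℝ) + ∑ ℓ, Φ ℓ x = 1 := by
    rw [← hsum x, ← sum_spannedLines]
  have : Nonempty (spannedLines S) := (hS.image _).to_subtype
  obtain ⟨Λ, hΛ, C, hC, hΛC⟩ := exists_decomposition_of_add_sum_eq_one
    (fun ℓ x => Finset.sum_nonneg fun f _ => hφ f x) sum_lines
    (fun _ _ hne => finiteIndex_sup_of_detHom_ne_zero (period _) (period _) (hdet hne))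
    fun ℓ => (exists_detHom_pos (hk ℓ)).imp fun v hv => finiteIndex_sup_of_detHom_ne_zero
      (period ℓ) (AddSubgroup.mem_zmultiples v) hv.ne'
  obtain ⟨n, hn, hnΛ⟩ := exists_nsmul_mem_of_finiteIndex hΛ
  refine ⟨C, fun ℓ => n • k ℓ, hC, fun ℓ => hΛC ℓ ⟨hnΛ _, nsmul_mem (period ℓ) n⟩,
    fun ℓ => smul_ne_zero hn (hk ℓ), fun ℓ ℓ' hne => ?_⟩
  change detHom (n • k ℓ) (n • k ℓ') ≠ 0
  rw [map_nsmul, detHom_swap, map_nsmul]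
  exact smul_ne_zero hn (neg_ne_zero.2 (smul_ne_zero hn (hdet hne.symm)))

theorem exists_decomposition_of_tileSum_eq_one {F : Finset (ℤ × ℤ)} {c : ℤ × ℤ → ℕ} (h0 : 0 ∈ F)
    (h : tileSum F c = 1) :
    ∃ (ι : Type) (_ : Fintype ι) (C : ι → ℤ × ℤ → ℕ) (k : ι → ℤ × ℤ), c = ∑ i, C i ∧
      (∀ i, k i ∈ periods (C i)) ∧ (∀ i, k i ≠ 0) ∧
      Pairwise fun i j => detHom (k i) (k j) ≠ 0 := by
  obtain ⟨φ, hφ, hφF, hsum⟩ := exists_periodic_add_sum_eq_one h0 h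
  rcases (F.erase 0).eq_empty_or_nonempty with hS | hS
  · have c_eq : c = 1 := by
      ext x
      simpa [hS] using hsum x
    exact ⟨Unit, inferInstance, fun _ => c, fun _ => (1, 0), by simp, fun _ x => by simp [c_eq],
      by simp, fun _ _ hne => (hne rfl).elim⟩
  · exact ⟨_, inferInstance, exists_decomposition_by_lines hS
      (fun f hf => Finset.ne_of_mem_erase hf) hφ
      (fun f _ => ⟨F.card.factorial, F.card.factorial_ne_zero, hφF f⟩) hsum⟩

theorem exists_finiteIndex_periods_of_decomposition {F : Finset (ℤ × ℤ)} {ι : Type*} [Fintype ι]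
    {C : ι → ℤ × ℤ → ℕ} {k : ι → ℤ × ℤ} (h : tileSum F (∑ i, C i) = 1)
    (hkC : ∀ i, k i ∈ periods (C i)) (hk : ∀ i, k i ≠ 0)
    (hdet : Pairwise fun i j => detHom (k i) (k j) ≠ 0) :
    ∃ c' : ℤ × ℤ → ℕ, (periods c').FiniteIndex ∧ tileSum F c' = 1 := by
  have finite_range (i : ι) : (Set.range (C i)).Finite := by
    refine (Set.finite_Iic 1).subset (Set.range_subset_iff.2 fun x => ?_)
    refine le_trans ?_ (apply_le_one_of_tileSum_eq_one h x)
    rw [Finset.sum_apply]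
    exact Finset.single_le_sum (f := fun j => C j x) (fun _ _ => Nat.zero_le _) (Finset.mem_univ i)
  have tileSum_finiteIndex (i : ι) : (periods (tileSum F (C i))).FiniteIndex := by
    refine finiteIndex_periods_of_sum_eq_one (e := fun i => tileSum F (C i)) (fun x => ?_) ?_ i
    · rw [← Finset.sum_apply, ← tileSum_sum, h, Pi.one_apply]
    · exact fun i j hij => finiteIndex_sup_of_detHom_ne_zero
        (periods_le_periods_tileSum F _ (hkC i)) (periods_le_periods_tileSum F _ (hkC j)) (hdet hij)
  have periodic_summand (i : ι) :
      ∃ c', (periods c').FiniteIndex ∧ tileSum F c' = tileSum F (C i) := by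
    obtain ⟨v, hv⟩ := exists_detHom_pos (hk i)
    exact exists_finiteIndex_periods_tileSum_eq (detHom (k i)) (finite_range i)
      (tileSum_finiteIndex i) hv (finiteIndex_sup_of_detHom_ne_zero ⟨hkC i, detHom_self _⟩
        (AddSubgroup.mem_zmultiples v) hv.ne')
  choose c' hc' hc'C using periodic_summand
  exact ⟨∑ i, c' i, finiteIndex_periods_sum hc', by simp only [← h, tileSum_sum, hc'C]⟩

theorem exists_finiteIndex_periods_tileSum_eq_one {F : Finset (ℤ × ℤ)} {c : ℤ × ℤ → ℕ}
    (h : tileSum F c = 1) : ∃ c' : ℤ × ℤ → ℕ, (periods c').FiniteIndex ∧ tileSum F c' = 1 := by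
  obtain ⟨f₀, hf₀⟩ : F.Nonempty := Finset.nonempty_of_sum_ne_zero
    ((congrFun h 0).trans_ne one_ne_zero)
  let F₀ := F.map (Equiv.subRight f₀).toEmbedding
  have zero_mem : 0 ∈ F₀ := Finset.mem_map.2 ⟨f₀, hf₀, sub_self f₀⟩
  have translate (c : ℤ × ℤ → ℕ) : tileSum F₀ c = 1 ↔ tileSum F c = 1 := by
    simp only [funext_iff, F₀, tileSum_map_subRight, Pi.one_apply]
    exact (Equiv.addRight f₀).forall_congr_right (q := fun x => tileSum F c x = 1)
  obtain ⟨ι, _, C, k, rfl, hkC, hk, hdet⟩ :=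
    exists_decomposition_of_tileSum_eq_one zero_mem ((translate c).2 h)
  obtain ⟨c', hc', htile⟩ :=
    exists_finiteIndex_periods_of_decomposition ((translate _).2 h) hkC hk hdet
  exact ⟨c', hc', (translate c').1 htile⟩

theorem tileOplus_univ_iff_tileSum_eq_one (F : Finset (ℤ × ℤ)) (C : Set (ℤ × ℤ)) :
    TileOplus F C Set.univ ↔ tileSum F (C.indicator (1 : ℤ × ℤ → ℕ)) = 1 := by
  classical
  have count (x : ℤ × ℤ) :
      tileSum F (C.indicator (1 : ℤ × ℤ → ℕ)) x = (F.filter fun f => x - f ∈ C).card := by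
    simp only [tileSum, Set.indicator_apply, Pi.one_apply, Finset.card_filter]
  have unique_iff (x : ℤ × ℤ) : (∃! p : (ℤ × ℤ) × (ℤ × ℤ), p.1 ∈ F ∧ p.2 ∈ C ∧ p.1 + p.2 = x) ↔
      ∃! f, f ∈ F ∧ x - f ∈ C := by
    constructor
    · rintro ⟨⟨f, y⟩, ⟨hf, hy, rfl⟩, unique⟩
      refine ⟨f, ⟨hf, by rwa [add_sub_cancel_left]⟩, fun g hg => ?_⟩
      exact congrArg Prod.fst (unique (g, f + y - g) ⟨hg.1, hg.2, add_sub_cancel _ _⟩)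
    · rintro ⟨f, ⟨hf, hy⟩, unique⟩
      refine ⟨(f, x - f), ⟨hf, hy, add_sub_cancel _ _⟩, ?_⟩
      rintro ⟨g, z⟩ ⟨hg, hz, rfl⟩
      obtain rfl := unique g ⟨hg, by rwa [add_sub_cancel_left]⟩
      rw [add_sub_cancel_left]
  simp only [TileOplus, Set.mem_univ, implies_true, true_and, forall_const, Finset.mem_coe,
    funext_iff, count, Finset.card_eq_one_iff_existsUnique, Finset.mem_filter, unique_iff,
    Pi.one_apply]

end PeriodicTiling

/-- **Periodic tiling theorem for `ℤ²`.** If a finite set `F ⊆ ℤ²` tiles `ℤ²` by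
translations, then it also admits a periodic tiling: there are `C' ⊆ ℤ²` and a finite
index subgroup `Λ' ⊆ ℤ²` with `F ⊕ C' = ℤ²` and `C' + Λ' = C'`. -/
theorem periodic_tiling_Z2 (F C : Set (ℤ × ℤ)) (hF : F.Finite)
    (hFC : TileOplus F C Set.univ) :
    ∃ (C' : Set (ℤ × ℤ)) (Λ' : AddSubgroup (ℤ × ℤ)), Λ'.FiniteIndex ∧
      TileOplus F C' Set.univ ∧ ∀ h ∈ Λ', ∀ x : ℤ × ℤ, x + h ∈ C' ↔ x ∈ C' := by
  lift F to Finset (ℤ × ℤ) using hF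
  obtain ⟨c', hc', htile⟩ :=
    exists_finiteIndex_periods_tileSum_eq_one ((tileOplus_univ_iff_tileSum_eq_one F C).1 hFC)
  have c'_eq : c' = Set.indicator {x | c' x = 1} 1 := by
    ext x
    have := apply_le_one_of_tileSum_eq_one htile x
    simp only [Set.indicator_apply, Set.mem_ofPred_eq, Pi.one_apply]
    split_ifs <;> omega
  have tiling := (tileOplus_univ_iff_tileSum_eq_one F {x | c' x = 1}).2 (c'_eq ▸ htile)
  refine ⟨{x | c' x = 1}, periods c', hc', tiling, fun h hh x => ?_⟩
  rw [Set.mem_ofPred_eq, Set.mem_ofPred_eq, mem_periods.1 hh]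
end

section
/- Let (X, μ) be a probability space equipped with an ergodic measure-preserving action of ℤ², and let A ⊆ X be a measurable set such that for some elements g₁, …, gₙ ∈ ℤ² the sets g₁A, …, gₙA form a partition of X (up to μ-null sets). Then there exists a finite partition (A₁, …, A_m) of A into measurable sets such that each A_i is invariant (up to μ-null sets) under the action of some nonzero element of ℤ². -/
open MeasureTheory

/-!
If `B ⊆ ℤ²` is tiled by the translations `f i`, then it is also tiled by the translations
`r • f i` for every `r` coprime to the factorial of their number. Applying this to the return times
of orbits to `A`, averaging over `r ≡ 1` and using the mean ergodic theorem, one writes `1 - 1_A` as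
a sum of nonnegative functions `ρ i`, each invariant under a nonzero vector `w i`; merging
parallel vectors, one may take the `w i` pairwise independent. Modulo `1` the `ρ i` add up to
zero, which makes each of them a polynomial along the vectors of a suitable lattice. By Poincaré
recurrence this polynomial vanishes infinitely often on the orbit of almost every point of `A`, so
its values are torsion and it is periodic, and ergodicity makes the period uniform. Hence on the
orbit of a point of `A` under some finite-index subgroup `H`, the `ρ i` only take the values `0`
and `1`, and by independence of the `w i` at most one of them, say `ρ i`, takes the value `1`.
Then `A` is invariant under a multiple of `w i` on that orbit; if all `ρ i` vanish there, then `A`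
contains the whole `H`-orbit.
-/

open Filter Function Topology
open scoped fwdDiff Nat

section Polynomial

theorem det_choose_ne_zero {D : ℕ} {v : Fin D → ℕ} (hv : Injective v) :
    (Matrix.of fun i j : Fin D ↦ ((v i).choose j : ℤ)).det ≠ 0 := by
  intro h0
  have hdet := Matrix.det_eval_matrixOfPolynomials_eq_det_vandermonde (fun i ↦ (v i : ℤ))
    (fun j ↦ descPochhammer ℤ j) (fun j ↦ descPochhammer_natDegree ℤ j)
    fun j ↦ monic_descPochhammer ℤ j
  have hrow := Matrix.det_mul_row (fun j : Fin D ↦ ((j : ℕ)! : ℤ))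
    (Matrix.of fun i j : Fin D ↦ ((v i).choose j : ℤ))
  simp only [Matrix.of_apply, ← Nat.cast_mul, ← Nat.descFactorial_eq_factorial_mul_choose, h0,
    mul_zero] at hrow
  simp only [descPochhammer_eval_eq_descFactorial, hrow] at hdet
  exact Matrix.det_vandermonde_ne_zero_iff.2 (Nat.cast_injective.comp hv) hdet

theorem det_smul_eq_zero_of_forall_sum_smul_eq_zero {R G n : Type*} [CommRing R] [AddCommGroup G]
    [Module R G] [Fintype n] [DecidableEq n] {A : Matrix n n R} {a : n → G}
    (h : ∀ i, ∑ j, A i j • a j = 0) (i : n) : A.det • a i = 0 := by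
  calc A.det • a i
    _ = ∑ j, (A.adjugate * A) i j • a j := by
      simp [Matrix.adjugate_mul, Matrix.smul_apply, Matrix.one_apply]
    _ = ∑ l, A.adjugate i l • ∑ j, A l j • a j := by
      simp only [Finset.smul_sum, Matrix.mul_apply, Finset.sum_smul, smul_smul]
      exact Finset.sum_comm
    _ = 0 := by simp [h]

variable {M G : Type*} [AddCommMonoid M] [AddCommGroup G] {P : M → G} {w : M} {D : ℕ}

theorem eq_sum_choose_smul_of_fwdDiff_iter_eq_zero (hP : Δ_[w] ^[D] P = 0) (x : M) (n : ℕ) :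
    P (x + n • w) = ∑ j : Fin D, n.choose j • Δ_[w] ^[j] P x := by
  have hzero {j : ℕ} (hj : D ≤ j) : Δ_[w] ^[j] P = 0 := by
    induction j, hj using Nat.le_induction with
    | base => exact hP
    | succ j _ ih => rw [iterate_succ_apply', ih]; exact fwdDiff_const w 0
  rw [shift_eq_sum_fwdDiff_iter w P n x, Fin.sum_univ_eq_sum_range fun j ↦
    n.choose j • Δ_[w] ^[j] P x]
  rcases le_total D (n + 1) with h | h
  · refine (Finset.sum_subset (Finset.range_subset_range.2 h) fun j _ hj ↦ ?_).symm
    simp [hzero (not_lt.1 (Finset.mem_range.not.1 hj))]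
  · refine Finset.sum_subset (Finset.range_subset_range.2 h) fun j _ hj ↦ ?_
    rw [Nat.choose_eq_zero_of_lt (by simpa using hj), zero_smul]

/- The coefficients of the Newton expansion at `D` distinct zeros form an integer matrix with
nonzero determinant, which therefore annihilates the differences `Δ_[w] ^[j] P x`. -/
theorem exists_nsmul_eq_zero_of_fwdDiff_iter_eq_zero (hP : Δ_[w] ^[D] P = 0) {x : M}
    (hzero : ∃ᶠ n : ℕ in atTop, P (x + n • w) = 0) :
    ∃ k : ℕ, 0 < k ∧ ∀ n : ℕ, k • P (x + n • w) = 0 := by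
  have hinf := Nat.frequently_atTop_iff_infinite.1 hzero
  let v : Fin D → ℕ := fun i ↦ hinf.natEmbedding _ i
  have hv : Injective v :=
    Subtype.val_injective.comp ((hinf.natEmbedding _).injective.comp Fin.val_injective)
  have hsum (i : Fin D) : ∑ j : Fin D, ((v i).choose j : ℤ) • Δ_[w] ^[j] P x = 0 := by
    simp only [natCast_zsmul, ← eq_sum_choose_smul_of_fwdDiff_iter_eq_zero hP]
    exact (hinf.natEmbedding _ i).2
  refine ⟨_, Int.natAbs_pos.2 (det_choose_ne_zero hv), fun n ↦ ?_⟩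
  rw [eq_sum_choose_smul_of_fwdDiff_iter_eq_zero hP, Finset.smul_sum]
  refine Finset.sum_eq_zero fun j _ ↦ ?_
  have hj := det_smul_eq_zero_of_forall_sum_smul_eq_zero
    (A := .of fun i (j : Fin D) ↦ ((v i).choose j : ℤ)) hsum j
  rw [smul_comm, natAbs_nsmul_eq_zero.2 hj, smul_zero]

theorem dvd_choose_mul_factorial (k : ℕ) {D j : ℕ} (hj : 0 < j) (hjD : j ≤ D) :
    k ∣ (k * D !).choose j := by
  obtain ⟨c, hc⟩ := Nat.dvd_factorial hj hjD
  obtain ⟨j, rfl⟩ := Nat.exists_eq_add_one.2 hj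
  rcases Nat.eq_zero_or_pos k with rfl | hk
  · simp
  obtain ⟨N, hN⟩ := Nat.exists_eq_add_one.2 (Nat.mul_pos hk D.factorial_pos)
  refine ⟨c * N.choose j, Nat.eq_of_mul_eq_mul_right hj ?_⟩
  rw [hN, ← Nat.add_one_mul_choose_eq, ← hN, hc]
  ring

theorem add_nsmul_eq_of_fwdDiff_iter_eq_zero (hP : Δ_[w] ^[D] P = 0) {x : M} {k : ℕ}
    (hk : ∀ n : ℕ, k • P (x + n • w) = 0) : P (x + (k * D !) • w) = P x := by
  have hdiff (j : ℕ) : k • Δ_[w] ^[j] P x = 0 := by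
    rw [fwdDiff_iter_eq_sum_shift, Finset.smul_sum]
    exact Finset.sum_eq_zero fun n _ ↦ by rw [smul_comm, hk, smul_zero]
  have hx := eq_sum_choose_smul_of_fwdDiff_iter_eq_zero hP x 0
  rw [zero_smul, add_zero] at hx
  rw [eq_sum_choose_smul_of_fwdDiff_iter_eq_zero hP, hx]
  refine Finset.sum_congr rfl fun j _ ↦ ?_
  rcases Nat.eq_zero_or_pos (j : ℕ) with hj | hj
  · simp [hj]
  · obtain ⟨c, hc⟩ := dvd_choose_mul_factorial k hj j.is_lt.le
    rw [hc, mul_comm, mul_smul, hdiff, Nat.choose_eq_zero_of_lt hj, smul_zero, zero_smul]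

end Polynomial

section Periodic

variable {M G ι : Type*} [AddCommGroup M] [AddCommGroup G]

open AddSubgroup in
theorem fwdDiff_iter_card_eq_zero_of_eq_sum_periodic {P : M → G} {h k : M} (hP : Periodic P h)
    {s : Finset ι} {Q : ι → M → G} {w : ι → M} (hQ : ∀ j ∈ s, Periodic (Q j) (w j))
    (hsum : P = ∑ j ∈ s, Q j) (hk : ∀ j ∈ s, k ∈ zmultiples h ⊔ zmultiples (w j)) :
    Δ_[k] ^[s.card] P = 0 := by
  classical
  induction s using Finset.induction_on generalizing P Q with
  | empty => simpa using hsum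
  | insert i s hi ih =>
    obtain ⟨_, ⟨α, rfl⟩, _, ⟨β, rfl⟩, rfl⟩ := mem_sup.1 (hk i (s.mem_insert_self i))
    have hPα (x : M) : P (x + (α • h + β • w i)) = P (x + β • w i) := by
      rw [add_comm (α • h), ← add_assoc, hP.zsmul α]
    rw [Finset.card_insert_of_notMem hi, iterate_succ_apply]
    -- Modulo `h` the step `k` is a multiple of `w i`, so differencing along it kills `Q i`.
    refine ih (Q := fun j ↦ Δ_[β • w i] (Q j)) (fun x ↦ ?_) (fun j hj x ↦ ?_) (funext fun x ↦ ?_)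
      fun j hj ↦ hk j (Finset.mem_insert_of_mem hj)
    · simp only [fwdDiff]
      rw [add_right_comm, hP, hP]
    · simp only [fwdDiff]
      rw [add_right_comm, hQ j (Finset.mem_insert_of_mem hj), hQ j (Finset.mem_insert_of_mem hj)]
    · have hQi : Δ_[β • w i] (Q i) x = 0 :=
        sub_eq_zero.2 ((hQ i (s.mem_insert_self i)).zsmul β x)
      rw [← fwdDiff_finsetSum, fwdDiff, hPα]
      change Δ_[β • w i] P x = _
      rw [hsum, Finset.sum_insert hi, fwdDiff_add, Pi.add_apply, hQi, zero_add]

end Periodic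

section Plane

/-- The determinant of the pair `(a, b)`; it vanishes exactly when `a` and `b` are parallel. -/
def planeDet (a b : ℤ × ℤ) : ℤ := a.1 * b.2 - a.2 * b.1

theorem planeDet_smul_left (k : ℤ) (a b : ℤ × ℤ) : planeDet (k • a) b = k * planeDet a b := by
  simp only [planeDet, Prod.smul_fst, Prod.smul_snd, smul_eq_mul]; ring

theorem planeDet_smul_right (k : ℤ) (a b : ℤ × ℤ) : planeDet a (k • b) = k * planeDet a b := by
  simp only [planeDet, Prod.smul_fst, Prod.smul_snd, smul_eq_mul]; ring

theorem planeDet_smul_eq_add (a b v : ℤ × ℤ) :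
    planeDet a b • v = planeDet v b • a + planeDet a v • b := by
  ext <;> simp only [planeDet, Prod.fst_add, Prod.snd_add, Prod.smul_fst, Prod.smul_snd,
    smul_eq_mul] <;> ring

theorem exists_forall_planeDet_ne_zero {κ : Type*} [Finite κ] {w : κ → ℤ × ℤ}
    (hw : ∀ i, w i ≠ 0) : ∃ u, ∀ i, planeDet (w i) u ≠ 0 := by
  have hfin (i : κ) : {t : ℤ | planeDet (w i) (1, t) = 0}.Finite := by
    refine Set.Subsingleton.finite fun s hs t ht ↦ ?_
    simp only [Set.mem_ofPred_eq, planeDet, mul_one, sub_eq_zero] at hs ht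
    refine mul_left_cancel₀ (fun h1 ↦ hw i (Prod.ext h1 ?_)) (hs.trans ht.symm)
    simpa [h1] using hs.symm
  obtain ⟨t, ht⟩ := (Set.finite_iUnion hfin).infinite_compl.nonempty
  exact ⟨(1, t), fun i hi ↦ ht (Set.mem_iUnion.2 ⟨i, hi⟩)⟩

/- Normalise the multiples so that all of them have the same determinant with a vector `u` that is
parallel to none of them. -/
theorem exists_mem_zmultiples_forall_planeDet_eq_zero {κ : Type*} [Finite κ] {w : κ → ℤ × ℤ}
    (hw : ∀ i, w i ≠ 0) : ∃ z : κ → ℤ × ℤ, (∀ i, z i ≠ 0) ∧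
      (∀ i, z i ∈ AddSubgroup.zmultiples (w i)) ∧ ∀ i j, planeDet (z i) (z j) = 0 → z i = z j := by
  classical
  have := Fintype.ofFinite κ
  obtain ⟨u, hu⟩ := exists_forall_planeDet_ne_zero hw
  let z (i : κ) : ℤ × ℤ := (∏ j ∈ Finset.univ.erase i, planeDet (w j) u) • w i
  have hz (i : κ) : planeDet (z i) u = ∏ j, planeDet (w j) u := by
    rw [planeDet_smul_left, Finset.prod_erase_mul _ _ (Finset.mem_univ i)]
  have hprod : ∏ j, planeDet (w j) u ≠ 0 := Finset.prod_ne_zero_iff.2 fun j _ ↦ hu j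
  refine ⟨z, fun i ↦ ?_, fun i ↦ ⟨_, rfl⟩, fun i j hij ↦ smul_right_injective _ hprod ?_⟩
  · exact smul_ne_zero (Finset.prod_ne_zero_iff.2 fun j _ ↦ hu j) (hw i)
  · have hcramer := planeDet_smul_eq_add (z i) u (z j)
    rw [hij, zero_smul, add_zero, hz, hz] at hcramer
    exact hcramer.symm

theorem finiteIndex_of_forall_nsmul_mem {G : Type*} [AddCommGroup G] [AddGroup.FG G]
    {H : AddSubgroup G} {k : ℕ} (hk : k ≠ 0) (h : ∀ v, k • v ∈ H) : H.FiniteIndex := by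
  have : Finite (G ⧸ H) := AddCommGroup.finite_of_fg_isAddTorsion (G ⧸ H) fun q ↦ by
    obtain ⟨v, rfl⟩ := QuotientAddGroup.mk_surjective q
    exact isOfFinAddOrder_iff_nsmul_eq_zero.2
      ⟨k, Nat.pos_of_ne_zero hk, (QuotientAddGroup.eq_zero_iff _).2 (h v)⟩
  exact AddSubgroup.finiteIndex_of_finite_quotient

theorem finiteIndex_map_nsmul {G : Type*} [AddCommGroup G] [AddGroup.FG G] (H : AddSubgroup G)
    [H.FiniteIndex] {k : ℕ} (hk : k ≠ 0) : (H.map (nsmulAddMonoidHom k)).FiniteIndex :=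
  finiteIndex_of_forall_nsmul_mem (mul_ne_zero hk AddSubgroup.FiniteIndex.index_ne_zero)
    fun v ↦ ⟨H.index • v, H.nsmul_index_mem v, (mul_nsmul' v k H.index).symm⟩

open AddSubgroup in
theorem finiteIndex_zmultiples_sup {a b : ℤ × ℤ} (hab : planeDet a b ≠ 0) :
    (zmultiples a ⊔ zmultiples b).FiniteIndex := by
  refine finiteIndex_of_forall_nsmul_mem (Int.natAbs_ne_zero.2 hab) fun v ↦ ?_
  have hmem : planeDet a b • v ∈ zmultiples a ⊔ zmultiples b := by
    rw [planeDet_smul_eq_add]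
    exact add_mem (mem_sup_left ⟨_, rfl⟩) (mem_sup_right ⟨_, rfl⟩)
  rcases Int.natAbs_eq (planeDet a b) with h | h
  · rwa [h, natCast_zsmul] at hmem
  · rwa [h, neg_smul, natCast_zsmul, neg_mem_iff] at hmem

/-- The elements of `M` that are, for each pair `i ≠ j`, a sum of a multiple of `w i` and a
multiple of `w j`. -/
def pairwiseSpan {M ι : Type*} [AddCommGroup M] (w : ι → M) : AddSubgroup M :=
  ⨅ p : {p : ι × ι // p.1 ≠ p.2},
    AddSubgroup.zmultiples (w p.1.1) ⊔ AddSubgroup.zmultiples (w p.1.2)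

theorem pairwiseSpan_le {M ι : Type*} [AddCommGroup M] (w : ι → M) {i j : ι} (hij : i ≠ j) :
    pairwiseSpan w ≤ AddSubgroup.zmultiples (w i) ⊔ AddSubgroup.zmultiples (w j) :=
  iInf_le_of_le ⟨(i, j), hij⟩ le_rfl

theorem finiteIndex_pairwiseSpan {ι : Type*} [Finite ι] {w : ι → ℤ × ℤ}
    (hw : Pairwise fun i j ↦ planeDet (w i) (w j) ≠ 0) : (pairwiseSpan w).FiniteIndex :=
  AddSubgroup.finiteIndex_iInf fun p ↦ finiteIndex_zmultiples_sup (hw p.2)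

end Plane

section Tiling

/-- `B` tiles `M` by the translations `f i`: every element of `M` lies in exactly one of the
translates `B - f i`. -/
def IsTiling {M ι : Type*} [Add M] (B : Set M) (f : ι → M) : Prop :=
  ∀ v, ∃! i, v + f i ∈ B

/-- Translation of functions on `M`, as a representation of `M`. -/
def translationRep (R M : Type*) [CommSemiring R] [AddCommMonoid M] :
    Multiplicative M →* Module.End R (M → R) where
  toFun g := LinearMap.funLeft R R (· + g.toAdd)
  map_one' := by ext; simp [LinearMap.funLeft]
  map_mul' a b := by ext; simp [LinearMap.funLeft, add_assoc]

variable {M ι : Type*}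

open AddMonoidAlgebra in
theorem lift_translationRep_sum_single [Fintype ι] {R : Type*} [CommSemiring R] [AddCommMonoid M]
    (f : ι → M) (b : M → R) (v : M) :
    lift R _ M (translationRep R M) (∑ i, single (f i) 1) b v = ∑ i, b (v + f i) := by
  simp [map_sum, lift_single, translationRep, LinearMap.funLeft]

theorem sum_indicator_one_eq_card [Fintype ι] {R : Type*} [AddCommMonoidWithOne R] [Add M]
    (B : Set M) [DecidablePred (· ∈ B)] (f : ι → M) (v : M) :
    ∑ i, B.indicator (1 : M → R) (v + f i) = (Finset.univ.filter (v + f · ∈ B)).card := by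
  simp [Set.indicator_apply]

namespace IsTiling

variable {B : Set M} {f : ι → M}

theorem add_const [AddCommSemigroup M] (hB : IsTiling B f) (c : M) :
    IsTiling B (f · + c) := fun v ↦ by
  simpa only [add_assoc, add_comm c] using hB (v + c)

theorem injective [AddGroup M] (hB : IsTiling B f) : Injective f := fun i j hij ↦ by
  obtain ⟨k, hk, -⟩ := hB 0
  rw [zero_add] at hk
  exact (hB (f k - f i)).unique (by rwa [sub_add_cancel]) (by rwa [hij, sub_add_cancel])

variable [Fintype ι] [AddCommMonoid M]

theorem card_pos (hB : IsTiling B f) : 0 < Fintype.card ι :=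
  Fintype.card_pos_iff.2 (hB 0).exists.nonempty

theorem sum_indicator_eq_one (hB : IsTiling B f) (R : Type*) [AddCommMonoidWithOne R] (v : M) :
    ∑ i, B.indicator (1 : M → R) (v + f i) = 1 := by
  classical
  rw [sum_indicator_one_eq_card, (Fintype.existsUnique_iff_card_one _).1 (hB v), Nat.cast_one]

open AddMonoidAlgebra in
theorem lift_translationRep_pow_succ_indicator (hB : IsTiling B f) (R : Type*) [CommSemiring R]
    (k : ℕ) :
    lift R _ M (translationRep R M) ((∑ i, single (f i) 1) ^ (k + 1)) (B.indicator 1) =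
      fun _ ↦ (Fintype.card ι : R) ^ k := by
  induction k with
  | zero =>
    ext v
    rw [zero_add, pow_one, lift_translationRep_sum_single, hB.sum_indicator_eq_one, pow_zero]
  | succ k ih =>
    ext v
    rw [pow_succ', map_mul, Module.End.mul_apply, ih, lift_translationRep_sum_single]
    simp [pow_succ']

/- Over `ZMod p` the `p`-th power of the operator `b ↦ ∑ i, b (· + f i)` is
`b ↦ ∑ i, b (· + p • f i)`, so it maps the indicator of `B` to `(card ι) ^ (p - 1) = 1`. -/
open AddMonoidAlgebra in
theorem dilate_of_prime (hB : IsTiling B f) {p : ℕ} (hp : p.Prime) (hcard : Fintype.card ι < p) :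
    IsTiling B (p • f) := by
  classical
  have : Fact p.Prime := ⟨hp⟩
  have : CharP (AddMonoidAlgebra (ZMod p) M) p :=
    charP_of_injective_algebraMap (algebraMap (ZMod p) _).injective p
  have hfrob : (∑ i, single (f i) 1 : AddMonoidAlgebra (ZMod p) M) ^ p =
      ∑ i, single (p • f i) 1 := by
    simp only [sum_pow_char p, single_pow, one_pow]
  have hcard0 : (Fintype.card ι : ZMod p) ≠ 0 := fun h ↦
    (Nat.le_of_dvd hB.card_pos ((ZMod.natCast_eq_zero_iff _ _).1 h)).not_gt hcard
  refine fun v ↦ (Fintype.existsUnique_iff_card_one _).2 ?_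
  have hv := congrFun (hB.lift_translationRep_pow_succ_indicator (ZMod p) (p - 1)) v
  rw [Nat.sub_add_cancel hp.one_le, hfrob, lift_translationRep_sum_single,
    sum_indicator_one_eq_card, ZMod.pow_card_sub_one_eq_one hcard0, ← Nat.cast_one,
    ZMod.natCast_eq_natCast_iff'] at hv
  rwa [Nat.mod_eq_of_lt ((Finset.card_le_univ _).trans_lt hcard), Nat.mod_eq_of_lt hp.one_lt] at hv

theorem dilate {r : ℕ} (hB : IsTiling B f) (hr0 : r ≠ 0) (hr : r.Coprime (Fintype.card ι)!) :
    IsTiling B (r • f) := by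
  induction r using induction_on_primes generalizing f with
  | zero => exact absurd rfl hr0
  | one => rwa [one_smul]
  | prime_mul p r hp ih =>
    obtain ⟨hp_cop, hr_cop⟩ := Nat.coprime_mul_iff_left.1 hr
    have hcard := (Nat.coprime_factorial_iff hp.ne_one).1 hp_cop
    rw [hp.minFac_eq] at hcard
    rw [mul_comm, mul_smul]
    exact ih (hB.dilate_of_prime hp hcard) (right_ne_zero_of_mul hr0) hr_cop

theorem dilate_one_add (hB : IsTiling B f) (k : ℕ) :
    IsTiling B ((1 + k * (Fintype.card ι)!) • f) :=
  hB.dilate (by lia) (by simp)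

end IsTiling
end Tiling

section PeriodicDecomposition

/-- A decomposition of the complement of `B` into nonnegative functions: the indicator of `B` and
the functions `ρ i` sum to `1`, and `ρ i` has period `w i`. -/
structure IsPeriodicDecomposition {M ι : Type*} [Add M] [Fintype ι] (B : Set M) (ρ : ι → M → ℝ)
    (w : ι → M) : Prop where
  nonneg (i : ι) (v : M) : 0 ≤ ρ i v
  periodic (i : ι) : Periodic (ρ i) (w i)
  indicator_add_sum (v : M) : B.indicator 1 v + ∑ i, ρ i v = 1

theorem eq_zero_or_one_of_coe_unitAddCircle_eq_zero {r : ℝ} (h0 : 0 ≤ r) (h1 : r ≤ 1)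
    (hr : (r : UnitAddCircle) = 0) : r = 0 ∨ r = 1 := by
  obtain ⟨n, rfl⟩ := (AddCircle.coe_eq_zero_iff 1).1 hr
  rw [zsmul_one] at h0 h1 ⊢
  have hn0 : 0 ≤ n := mod_cast h0
  have hn1 : n ≤ 1 := mod_cast h1
  interval_cases n <;> simp

namespace IsPeriodicDecomposition

open AddSubgroup

section Periods

variable {M ι κ : Type*} [AddCommGroup M] [Fintype ι] {B : Set M} {ρ : ι → M → ℝ} {w z : ι → M}

theorem of_mem_zmultiples (hd : IsPeriodicDecomposition B ρ w)
    (hz : ∀ i, z i ∈ zmultiples (w i)) : IsPeriodicDecomposition B ρ z where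
  nonneg := hd.nonneg
  periodic i := by
    obtain ⟨k, hk⟩ := hz i
    exact hk ▸ (hd.periodic i).zsmul k
  indicator_add_sum := hd.indicator_add_sum

theorem sum_fiberwise [Fintype κ] [DecidableEq κ] {z : κ → M} {e : ι → κ}
    (hd : IsPeriodicDecomposition B ρ (z ∘ e)) :
    IsPeriodicDecomposition B (fun j v ↦ ∑ i with e i = j, ρ i v) z where
  nonneg j v := Finset.sum_nonneg fun i _ ↦ hd.nonneg i v
  periodic j v := Finset.sum_congr rfl fun i hi ↦ by
    rw [← (Finset.mem_filter.1 hi).2]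
    exact hd.periodic i v
  indicator_add_sum v := by
    rw [Finset.sum_fiberwise]
    exact hd.indicator_add_sum v

end Periods

variable {M ι : Type*} [AddCommGroup M] [Fintype ι] {B : Set M} {ρ : ι → M → ℝ} {w : ι → M}
  {i j : ι} {u v : M}

theorem eq_zero_of_mem (hd : IsPeriodicDecomposition B ρ w) (hv : v ∈ B) (i : ι) : ρ i v = 0 := by
  have hsum := hd.indicator_add_sum v
  rw [Set.indicator_of_mem hv, Pi.one_apply, add_eq_left] at hsum
  exact (Finset.sum_eq_zero_iff_of_nonneg fun i _ ↦ hd.nonneg i v).1 hsum i (Finset.mem_univ i)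

theorem mem_of_forall_eq_zero (hd : IsPeriodicDecomposition B ρ w) (hv : ∀ i, ρ i v = 0) :
    v ∈ B := by
  have hsum := hd.indicator_add_sum v
  contrapose! hsum
  simp [hsum, hv]

theorem sum_le_one (hd : IsPeriodicDecomposition B ρ w) (s : Finset ι) (v : M) :
    ∑ i ∈ s, ρ i v ≤ 1 := by
  refine (Finset.sum_le_univ_sum_of_nonneg fun i ↦ hd.nonneg i v).trans ?_
  rw [← hd.indicator_add_sum v]
  exact le_add_of_nonneg_left (Set.indicator_nonneg (fun _ _ ↦ zero_le_one) v)

theorem eq_zero_or_one (hd : IsPeriodicDecomposition B ρ w) (hi : (ρ i v : UnitAddCircle) = 0) :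
    ρ i v = 0 ∨ ρ i v = 1 :=
  eq_zero_or_one_of_coe_unitAddCircle_eq_zero (hd.nonneg i v)
    (by simpa using hd.sum_le_one {i} v) hi

/- Modulo `1` the indicator of `B` disappears, so `ρ i` is minus the sum of the other `ρ j`. -/
theorem fwdDiff_iter_coe_eq_zero (hd : IsPeriodicDecomposition B ρ w)
    (hu : u ∈ pairwiseSpan w) (i : ι) :
    Δ_[u] ^[Fintype.card ι - 1] (fun v ↦ (ρ i v : UnitAddCircle)) = 0 := by
  classical
  rw [← Finset.card_univ, ← Finset.card_erase_of_mem (Finset.mem_univ i)]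
  refine fwdDiff_iter_card_eq_zero_of_eq_sum_periodic (Q := fun j v ↦ -(ρ j v : UnitAddCircle))
    (w := w) ((hd.periodic i).comp ((↑) : ℝ → UnitAddCircle))
    (fun j _ ↦ (hd.periodic j).comp fun r ↦ -(r : UnitAddCircle)) (funext fun v ↦ ?_)
    fun j hj ↦ pairwiseSpan_le w (Finset.ne_of_mem_erase hj).symm hu
  have hind : ((B.indicator 1 v : ℝ) : UnitAddCircle) = 0 := by
    by_cases hv : v ∈ B <;> simp [hv]
  have h1 : ((1 : ℝ) : UnitAddCircle) = 0 := AddCircle.coe_period 1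
  have hsum := congrArg (QuotientAddGroup.mk' (zmultiples (1 : ℝ))) (hd.indicator_add_sum v)
  rw [← Finset.add_sum_erase _ _ (Finset.mem_univ i), map_add, map_add, map_sum] at hsum
  rw [Finset.sum_apply, Finset.sum_neg_distrib, eq_neg_iff_add_eq_zero]
  simpa [hind, h1] using hsum

theorem exists_nsmul_coe_eq_zero_of_frequently (hd : IsPeriodicDecomposition B ρ w) {z : M}
    (hz : z ∈ pairwiseSpan w) (hpos : ∃ᶠ n : ℕ in atTop, n • z ∈ B)
    (hneg : ∃ᶠ n : ℕ in atTop, n • -z ∈ B) (i : ι) :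
    ∃ k : ℕ, 0 < k ∧ ∀ v ∈ zmultiples (w i) ⊔ zmultiples z, k • (ρ i v : UnitAddCircle) = 0 := by
  have htorsion {y : M} (hy : y ∈ pairwiseSpan w) (hfreq : ∃ᶠ n : ℕ in atTop, n • y ∈ B) :
      ∃ k : ℕ, 0 < k ∧ ∀ n : ℕ, k • (ρ i (n • y) : UnitAddCircle) = 0 := by
    simpa only [zero_add] using exists_nsmul_eq_zero_of_fwdDiff_iter_eq_zero
      (hd.fwdDiff_iter_coe_eq_zero hy i) (x := 0) <| hfreq.mono fun n hn ↦ by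
        rw [zero_add, hd.eq_zero_of_mem hn, AddCircle.coe_zero]
  obtain ⟨k, hk, hkz⟩ := htorsion hz hpos
  obtain ⟨l, hl, hlz⟩ := htorsion (neg_mem hz) hneg
  refine ⟨k * l, Nat.mul_pos hk hl, fun v hv ↦ ?_⟩
  obtain ⟨_, ⟨α, rfl⟩, _, ⟨β, rfl⟩, rfl⟩ := mem_sup.1 hv
  simp only
  rw [add_comm, (hd.periodic i).zsmul α]
  obtain ⟨n, rfl | rfl⟩ := β.eq_nat_or_neg
  · rw [natCast_zsmul, mul_nsmul, hkz, smul_zero]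
  · rw [neg_smul, natCast_zsmul, ← smul_neg, mul_nsmul', hlz, smul_zero]

theorem coe_nsmul_eq_zero (hd : IsPeriodicDecomposition B ρ w) (h0 : 0 ∈ B)
    (hu : u ∈ pairwiseSpan w) {k : ℕ} (hk : ∀ n : ℕ, k • (ρ i (n • u) : UnitAddCircle) = 0) :
    (ρ i ((k * (Fintype.card ι - 1)!) • u) : UnitAddCircle) = 0 := by
  have := add_nsmul_eq_of_fwdDiff_iter_eq_zero (hd.fwdDiff_iter_coe_eq_zero hu i) (x := 0) (k := k)
    (by simpa only [zero_add] using hk)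
  simpa only [zero_add, hd.eq_zero_of_mem h0, AddCircle.coe_zero] using this

theorem ne_one_of_sub_mem (hd : IsPeriodicDecomposition B ρ w) (hij : i ≠ j)
    (huv : u - v ∈ zmultiples (w i) ⊔ zmultiples (w j)) (hu : ρ i u = 1) : ρ j v ≠ 1 := by
  classical
  intro hv
  obtain ⟨_, ⟨α, rfl⟩, _, ⟨β, rfl⟩, hsum⟩ := mem_sup.1 huv
  have hi : ρ i (v + β • w j) = 1 := by
    rw [← hu, ← (hd.periodic i).zsmul α, ← sub_add_cancel u v, ← hsum]
    congr 1
    abel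
  have hj : ρ j (v + β • w j) = 1 := by rw [(hd.periodic j).zsmul β, hv]
  have := hd.sum_le_one {i, j} (v + β • w j)
  rw [Finset.sum_pair hij, hi, hj] at this
  norm_num at this

theorem mem_of_forall_ne_one (hd : IsPeriodicDecomposition B ρ w)
    (hcoe : ∀ i, (ρ i v : UnitAddCircle) = 0) (hne : ∀ i, ρ i v ≠ 1) : v ∈ B :=
  hd.mem_of_forall_eq_zero fun i ↦ (hd.eq_zero_or_one (hcoe i)).resolve_right (hne i)

theorem mem_of_eq_one (hd : IsPeriodicDecomposition B ρ w) (h0 : 0 ∈ B)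
    (hcoe : ∀ j, (ρ j v : UnitAddCircle) = 0) (hv : v ∈ zmultiples (w i)) (hu : ρ i u = 1)
    (huv : u - v ∈ pairwiseSpan w) : v ∈ B := by
  refine hd.mem_of_forall_ne_one hcoe fun j ↦ ?_
  rcases eq_or_ne i j with rfl | hij
  · obtain ⟨α, rfl⟩ := hv
    have := (hd.periodic i).zsmul α 0
    rw [zero_add, hd.eq_zero_of_mem h0] at this
    simp [this]
  · exact hd.ne_one_of_sub_mem hij (pairwiseSpan_le w hij huv) hu

end IsPeriodicDecomposition

end PeriodicDecomposition

section Dynamics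

variable {G X : Type*} [MeasurableSpace X] {μ : Measure X}

theorem ae_forall_vadd [VAdd G X] [MeasurableConstVAdd G X] [VAddInvariantMeasure G X μ]
    [Countable G] {p : X → Prop} (hp : ∀ᵐ x ∂μ, p x) : ∀ᵐ x ∂μ, ∀ v : G, p (v +ᵥ x) :=
  ae_all_iff.2 fun v ↦ (measurePreserving_vadd v μ).quasiMeasurePreserving.ae hp

theorem ae_mem_imp_frequently_nsmul_vadd_mem [AddMonoid G] [AddAction G X]
    [MeasurableConstVAdd G X] [VAddInvariantMeasure G X μ] [IsFiniteMeasure μ] {A : Set X}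
    (hA : NullMeasurableSet A μ) (z : G) :
    ∀ᵐ x ∂μ, x ∈ A → ∃ᶠ n : ℕ in atTop, n • z +ᵥ x ∈ A := by
  simpa only [vadd_iterate_apply] using
    (measurePreserving_vadd z μ).conservative.ae_mem_imp_frequently_image_mem hA

theorem preimage_vadd_ae_eq_of_forall_mem_imp [VAdd G X] [MeasurableConstVAdd G X]
    [VAddInvariantMeasure G X μ] [IsFiniteMeasure μ] {A : Set X} (hA : NullMeasurableSet A μ)
    {h : G} (hh : ∀ᵐ x ∂μ, x ∈ A → h +ᵥ x ∈ A) : (h +ᵥ ·) ⁻¹' A =ᵐ[μ] A := by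
  have hpre := (measurePreserving_vadd h μ).measure_preimage hA
  exact (ae_eq_of_ae_subset_of_measure_ge hh hpre.le hA (measure_ne_top _ _)).symm

variable [AddGroup G] [AddAction G X]

open scoped Pointwise in
theorem measure_eq_zero_of_index_mul_lt [ErgodicVAdd G X μ] [MeasurableConstVAdd G X]
    {H : AddSubgroup G} [H.FiniteIndex] {D : Set X} (hD : MeasurableSet D)
    (hinv : ∀ h ∈ H, ∀ x ∈ D, h +ᵥ x ∈ D) (hlt : H.index * μ D < μ Set.univ) : μ D = 0 := by
  classical
  have := H.fintypeQuotientOfFiniteIndex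
  let U : Set X := ⋃ v : G, v +ᵥ D
  have hU : U = ⋃ q : G ⧸ H, q.out +ᵥ D := by
    refine (Set.iUnion_subset fun v ↦ ?_).antisymm
      (Set.iUnion_mono' fun q ↦ ⟨q.out, subset_rfl⟩)
    rintro _ ⟨x, hx, rfl⟩
    obtain ⟨h, hh⟩ := QuotientAddGroup.mk_out_eq_add H v
    refine Set.mem_iUnion.2 ⟨v, -(h : G) +ᵥ x, hinv _ (neg_mem h.2) x hx, ?_⟩
    simp [hh, vadd_vadd]
  have hUle : μ U ≤ H.index * μ D := by
    calc μ U
      _ ≤ ∑ q : G ⧸ H, μ (q.out +ᵥ D) := hU ▸ measure_iUnion_fintype_le _ _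
      _ = H.index * μ D := by simp [measure_vadd, AddSubgroup.index_eq_card]
  have hconst : EventuallyConst U (ae μ) := by
    refine aeconst_of_forall_vadd_ae_eq G ?_ fun g ↦ ?_
    · exact (hU ▸ MeasurableSet.iUnion fun q ↦ hD.const_vadd _).nullMeasurableSet
    · simp only [U, Set.vadd_set_iUnion, vadd_vadd]
      rw [(AddGroup.addLeft_bijective g).surjective.iUnion_comp fun v ↦ v +ᵥ D]
      exact EventuallyEq.rfl
  have hU0 : μ U = 0 := by
    rcases eventuallyConst_set'.1 hconst with h | h
    · exact ae_eq_empty.1 h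
    · exact absurd hUle (by rwa [measure_congr h, not_le])
  refine measure_mono_null (Set.subset_iUnion_of_subset 0 ?_) hU0
  rw [zero_vadd]

theorem exists_ae_mem_imp_mem_of_monotone [ErgodicVAdd G X μ] [MeasurableConstVAdd G X]
    [IsFiniteMeasure μ] (H : AddSubgroup G) [H.FiniteIndex] {S : ℕ → Set X} (hS : Monotone S)
    (hmeas : ∀ k, MeasurableSet (S k)) (hinv : ∀ k, ∀ h ∈ H, ∀ x ∈ S k, h +ᵥ x ∈ S k) :
    ∃ m, ∀ᵐ x ∂μ, ∀ k, x ∈ S k → x ∈ S m := by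
  rcases eq_or_ne μ 0 with rfl | hμ
  · simp
  let D (m : ℕ) : Set X := (⋃ k, S k) \ S m
  have hDmeas (m : ℕ) : MeasurableSet (D m) := (MeasurableSet.iUnion hmeas).diff (hmeas m)
  have hDinter : ⋂ m, D m = ∅ := by
    rw [← Set.sdiff_iUnion, Set.sdiff_self]
  have hlim : Tendsto (fun m ↦ H.index * μ (D m)) atTop (𝓝 0) := by
    have := tendsto_measure_iInter_atTop (fun m ↦ (hDmeas m).nullMeasurableSet)
      (fun m n hmn ↦ Set.sdiff_subset_sdiff_right (hS hmn)) ⟨0, measure_ne_top μ _⟩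
    rw [hDinter, measure_empty] at this
    simpa using ENNReal.Tendsto.const_mul this (.inr (ENNReal.natCast_ne_top H.index))
  obtain ⟨m, hm⟩ := (hlim.eventually_lt_const (Measure.measure_univ_pos.2 hμ)).exists
  have hDinv (h : G) (hh : h ∈ H) (x : X) (hx : x ∈ D m) : h +ᵥ x ∈ D m := by
    obtain ⟨k, hk⟩ := Set.mem_iUnion.1 hx.1
    refine ⟨Set.mem_iUnion.2 ⟨k, hinv k h hh x hk⟩, fun hm ↦ hx.2 ?_⟩
    simpa using hinv m _ (neg_mem hh) _ hm
  refine ⟨m, ?_⟩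
  filter_upwards [measure_eq_zero_iff_ae_notMem.1
    (measure_eq_zero_of_index_mul_lt (hDmeas m) hDinv hm)] with x hx k hk
  by_contra hxm
  exact hx ⟨Set.mem_iUnion.2 ⟨k, hk⟩, hxm⟩

end Dynamics

section Averages

variable {X : Type*} [MeasurableSpace X] {μ : Measure X}

theorem exists_tendsto_birkhoffAverage_compMeasurePreserving {f : X → X}
    (hf : MeasurePreserving f μ μ) {ψ : Lp ℝ 2 μ} (hψ : 0 ≤ ψ) :
    ∃ ρ : Lp ℝ 2 μ, 0 ≤ ρ ∧ ρ ∘ f =ᵐ[μ] ρ ∧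
      Tendsto (birkhoffAverage ℝ (Lp.compMeasurePreserving f hf) id · ψ) atTop (𝓝 ρ) := by
  let U : Lp ℝ 2 μ →L[ℝ] Lp ℝ 2 μ := (Lp.compMeasurePreservingₗᵢ ℝ f hf).toContinuousLinearMap
  let ρ := (U.eqLocus (1 : Lp ℝ 2 μ →L[ℝ] Lp ℝ 2 μ)).orthogonalProjectionOnto ψ
  have hlim : Tendsto (birkhoffAverage ℝ U id · ψ) atTop (𝓝 ρ) :=
    U.tendsto_birkhoffAverage_orthogonalProjection (LinearIsometry.norm_toContinuousLinearMap_le _)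
      ψ
  have hiter (k : ℕ) : 0 ≤ U^[k] ψ := by
    induction k with
    | zero => exact hψ
    | succ k ih =>
      rw [iterate_succ_apply', ← Lp.coeFn_nonneg]
      rw [← Lp.coeFn_nonneg] at ih
      filter_upwards [hf.quasiMeasurePreserving.ae ih,
        Lp.coeFn_compMeasurePreserving (U^[k] ψ) hf] with x hx hcomp
      exact hx.trans_eq hcomp.symm
  refine ⟨ρ, ge_of_tendsto' hlim fun N ↦ ?_, ?_, hlim⟩
  · have hsum : 0 ≤ ∑ k ∈ Finset.range N, U^[k] ψ := Finset.sum_nonneg fun k _ ↦ hiter k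
    rw [← Lp.coeFn_nonneg] at hsum ⊢
    filter_upwards [hsum, Lp.coeFn_smul (N : ℝ)⁻¹ (∑ k ∈ Finset.range N, U^[k] ψ)] with x hx hsmul
    exact (mul_nonneg (inv_nonneg.2 N.cast_nonneg) hx).trans_eq hsmul.symm
  · have hfix : U ρ = ρ := ρ.2
    exact (Lp.coeFn_compMeasurePreserving ρ.1 hf).symm.trans
      (.of_eq (congrArg (fun ξ : Lp ℝ 2 μ ↦ ⇑ξ) hfix))

variable {G : Type*} [AddCommGroup G] [AddAction G X] [MeasurableConstVAdd G X]

section Indicator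

variable [IsFiniteMeasure μ] {A : Set X}

/-- The function `x ↦ A.indicator 1 (v +ᵥ x)`, as an element of `L²`. -/
noncomputable def vaddIndicatorLp (μ : Measure X) [IsFiniteMeasure μ] (hA : MeasurableSet A)
    (v : G) : Lp ℝ 2 μ :=
  indicatorConstLp 2 (measurable_const_vadd v hA) (measure_ne_top μ _) 1

theorem vaddIndicatorLp_coeFn (hA : MeasurableSet A) (v : G) :
    vaddIndicatorLp μ hA v =ᵐ[μ] fun x ↦ ((· +ᵥ x) ⁻¹' A).indicator 1 v :=
  indicatorConstLp_coeFn

theorem vaddIndicatorLp_nonneg (hA : MeasurableSet A) (v : G) : 0 ≤ vaddIndicatorLp μ hA v := by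
  rw [← Lp.coeFn_nonneg]
  filter_upwards [vaddIndicatorLp_coeFn hA v] with x hx
  rw [hx]
  exact Set.indicator_nonneg (fun _ _ ↦ zero_le_one) _

variable [VAddInvariantMeasure G X μ]

theorem compMeasurePreserving_vaddIndicatorLp (hA : MeasurableSet A) (v w : G) :
    Lp.compMeasurePreserving (w +ᵥ ·) (measurePreserving_vadd w μ) (vaddIndicatorLp μ hA v) =
      vaddIndicatorLp μ hA (v + w) := by
  rw [vaddIndicatorLp, Lp.indicatorConstLp_compMeasurePreserving]
  simp only [vaddIndicatorLp, Set.preimage_preimage, vadd_vadd]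

theorem birkhoffAverage_vaddIndicatorLp (hA : MeasurableSet A) (v w : G) (N : ℕ) :
    birkhoffAverage ℝ (Lp.compMeasurePreserving (w +ᵥ ·) (measurePreserving_vadd w μ)) id N
      (vaddIndicatorLp μ hA v) =
      (N : ℝ)⁻¹ • ∑ k ∈ Finset.range N, vaddIndicatorLp μ hA (v + k • w) := by
  have hiter (k : ℕ) : (Lp.compMeasurePreserving (w +ᵥ ·) (measurePreserving_vadd w μ))^[k]
      (vaddIndicatorLp μ hA v) = vaddIndicatorLp μ hA (v + k • w) := by
    induction k with
    | zero => simp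
    | succ k ih =>
      rw [iterate_succ_apply', ih, compMeasurePreserving_vaddIndicatorLp, succ_nsmul, add_assoc]
  simp only [birkhoffAverage, birkhoffSum, hiter, id]

end Indicator

variable {ι : Type*} [Fintype ι] [IsFiniteMeasure μ] {A : Set X} {f : ι → G}

theorem sum_vaddIndicatorLp_smul_eq_const (hA : MeasurableSet A)
    (hf : ∀ᵐ x ∂μ, IsTiling ((· +ᵥ x) ⁻¹' A) f) (k : ℕ) :
    ∑ i, vaddIndicatorLp μ hA (f i + k • (Fintype.card ι)! • f i) = Lp.const 2 μ 1 := by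
  refine Lp.ext ?_
  filter_upwards [hf, Lp.coeFn_const (p := 2) (μ := μ) (1 : ℝ),
    Lp.coeFn_finsetSum Finset.univ fun i ↦ vaddIndicatorLp μ hA (f i + k • (Fintype.card ι)! • f i),
    ae_all_iff.2 fun i ↦ vaddIndicatorLp_coeFn (μ := μ) hA (f i + k • (Fintype.card ι)! • f i)]
    with x htile hconst hsum hcoe
  rw [hconst, hsum, Finset.sum_apply]
  simp only [hcoe, const_apply]
  simpa [add_smul, mul_smul] using (htile.dilate_one_add k).sum_indicator_eq_one ℝ 0

variable [VAddInvariantMeasure G X μ]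

theorem exists_nonneg_invariant_vaddIndicatorLp_add_sum_eq_const [DecidableEq ι]
    (hA : MeasurableSet A) (hf : ∀ᵐ x ∂μ, IsTiling ((· +ᵥ x) ⁻¹' A) f) {i₀ : ι} (hi₀ : f i₀ = 0) :
    ∃ ρ : {i // i ≠ i₀} → Lp ℝ 2 μ, (∀ i, 0 ≤ ρ i) ∧
      (∀ i, ρ i ∘ ((Fintype.card ι)! • f i +ᵥ ·) =ᵐ[μ] ρ i) ∧
      vaddIndicatorLp μ hA (0 : G) + ∑ i, ρ i = Lp.const 2 μ 1 := by
  choose ρ hnonneg hinv hlim using fun i : {i // i ≠ i₀} ↦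
    exists_tendsto_birkhoffAverage_compMeasurePreserving
      (measurePreserving_vadd ((Fintype.card ι)! • f i) μ) (vaddIndicatorLp_nonneg hA (f i))
  simp only [birkhoffAverage_vaddIndicatorLp] at hlim
  refine ⟨ρ, hnonneg, hinv, tendsto_nhds_unique
    ((tendsto_finsetSum _ fun i _ ↦ hlim i).const_add (vaddIndicatorLp μ hA (0 : G)))
    (tendsto_const_nhds.congr' ?_)⟩
  filter_upwards [eventually_ne_atTop 0] with N hN
  have hk (k : ℕ) : ∑ i : {i // i ≠ i₀}, vaddIndicatorLp μ hA (f i + k • (Fintype.card ι)! • f i)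
      = Lp.const 2 μ 1 - vaddIndicatorLp μ hA (0 : G) := by
    rw [← sum_vaddIndicatorLp_smul_eq_const hA hf k, Fintype.sum_eq_add_sum_subtype_ne _ i₀, hi₀,
      smul_zero, smul_zero, add_zero, add_sub_cancel_left]
  rw [← Finset.smul_sum, Finset.sum_comm]
  simp only [hk, Finset.sum_const, Finset.card_range, ← Nat.cast_smul_eq_nsmul ℝ]
  rw [inv_smul_smul₀ (Nat.cast_ne_zero.2 hN), add_sub_cancel]

theorem exists_isPeriodicDecomposition [Countable G] [DecidableEq ι] (hA : MeasurableSet A)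
    (hf : ∀ᵐ x ∂μ, IsTiling ((· +ᵥ x) ⁻¹' A) f) {i₀ : ι} (hi₀ : f i₀ = 0) :
    ∃ ρ : {i // i ≠ i₀} → X → ℝ, (∀ i, Measurable (ρ i)) ∧
      ∀ᵐ x ∂μ, IsPeriodicDecomposition ((· +ᵥ x) ⁻¹' A) (fun i v ↦ ρ i (v +ᵥ x))
        fun i : {i // i ≠ i₀} ↦ (Fintype.card ι)! • f i := by
  classical
  obtain ⟨ρ, hnonneg, hinv, hsum⟩ :=
    exists_nonneg_invariant_vaddIndicatorLp_add_sum_eq_const hA hf hi₀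
  refine ⟨fun i ↦ ρ i, fun i ↦ (Lp.stronglyMeasurable (ρ i)).measurable, ?_⟩
  have hsum_ae : ∀ᵐ x ∂μ, A.indicator 1 x + ∑ i, ρ i x = 1 := by
    filter_upwards [Lp.coeFn_const (p := 2) (μ := μ) (1 : ℝ), Lp.coeFn_finsetSum Finset.univ ρ,
      Lp.coeFn_add (vaddIndicatorLp μ hA (0 : G)) (∑ i, ρ i),
      vaddIndicatorLp_coeFn (μ := μ) hA (0 : G)] with x h1 h2 h3 h4
    rw [hsum, h1, Pi.add_apply, h4, h2] at h3
    simpa only [Set.indicator_apply, Set.mem_preimage, zero_vadd, Finset.sum_apply, const_apply,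
      Pi.one_apply] using h3.symm
  filter_upwards [ae_forall_vadd (G := G) hsum_ae,
    ae_forall_vadd (G := G) (ae_all_iff.2 fun i ↦ (Lp.coeFn_nonneg (ρ i)).2 (hnonneg i)),
    ae_forall_vadd (G := G) (ae_all_iff.2 hinv)] with x hsum hnonneg hinv
  refine ⟨fun i v ↦ hnonneg v i, fun i v ↦ ?_, hsum⟩
  rw [add_comm, ← vadd_vadd]
  exact hinv v i

end Averages

section Integrality

variable {X : Type*} [MeasurableSpace X] {μ : Measure X}

theorem exists_isPeriodicDecomposition_pairwise_planeDet_ne_zero [VAdd (ℤ × ℤ) X] {ι : Type*}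
    [Fintype ι] {A : Set X} {ρ : ι → X → ℝ} {w : ι → ℤ × ℤ} (hw : ∀ i, w i ≠ 0)
    (hρ : ∀ i, Measurable (ρ i))
    (hd : ∀ᵐ x ∂μ, IsPeriodicDecomposition ((· +ᵥ x) ⁻¹' A) (fun i v ↦ ρ i (v +ᵥ x)) w) :
    ∃ (s : Finset (ℤ × ℤ)) (ρ' : s → X → ℝ), (∀ z : s, (z : ℤ × ℤ) ≠ 0) ∧
      (Pairwise fun y z : s ↦ planeDet y z ≠ 0) ∧ (∀ z, Measurable (ρ' z)) ∧
      ∀ᵐ x ∂μ, IsPeriodicDecomposition ((· +ᵥ x) ⁻¹' A) (fun z v ↦ ρ' z (v +ᵥ x)) Subtype.val := by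
  classical
  obtain ⟨z, hz0, hzw, hzdet⟩ := exists_mem_zmultiples_forall_planeDet_eq_zero hw
  let s := Finset.univ.image z
  let e : ι → s := fun i ↦ ⟨z i, Finset.mem_image_of_mem z (Finset.mem_univ i)⟩
  have he : Surjective e := fun ⟨y, hy⟩ ↦ by
    obtain ⟨i, -, rfl⟩ := Finset.mem_image.1 hy
    exact ⟨i, rfl⟩
  refine ⟨s, fun y x ↦ ∑ i with e i = y, ρ i x, he.forall.2 hz0, ?_,
    fun y ↦ Finset.measurable_fun_sum _ fun i _ ↦ hρ i, ?_⟩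
  · exact he.forall₂.2 fun i j hij h ↦ hij (Subtype.ext (hzdet i j h))
  · filter_upwards [hd] with x hx
    exact (hx.of_mem_zmultiples hzw).sum_fiberwise (z := Subtype.val) (e := e)

theorem exists_pos_ae_forall_mem_nsmul_eq_zero {G E : Type*} [AddGroup G] [Countable G]
    [AddAction G X] [MeasurableConstVAdd G X] [ErgodicVAdd G X μ] [IsFiniteMeasure μ] [AddMonoid E]
    [MeasurableSpace E] [MeasurableSingletonClass E] [MeasurableConstSMul ℕ E] (L : AddSubgroup G)
    [L.FiniteIndex] {ψ : X → E} (hψ : Measurable ψ) {A : Set X}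
    (h : ∀ᵐ x ∂μ, x ∈ A → ∃ k : ℕ, 0 < k ∧ ∀ v ∈ L, k • ψ (v +ᵥ x) = 0) :
    ∃ m : ℕ, 0 < m ∧ ∀ᵐ x ∂μ, x ∈ A → ∀ v ∈ L, m • ψ (v +ᵥ x) = 0 := by
  let S (k : ℕ) : Set X := {x | ∀ v ∈ L, k ! • ψ (v +ᵥ x) = 0}
  have hS {k l : ℕ} (hkl : k ∣ l) {y : E} (hy : k • y = 0) : l • y = 0 := by
    obtain ⟨c, rfl⟩ := hkl
    rw [mul_nsmul, hy, nsmul_zero]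
  have hmeas (k : ℕ) : MeasurableSet (S k) := by
    simp only [S, Set.ofPred_forall]
    exact .iInter fun v ↦ .iInter fun _ ↦
      ((hψ.comp (measurable_const_vadd v)).const_smul (k !)) (measurableSet_singleton 0)
  obtain ⟨m, hm⟩ := exists_ae_mem_imp_mem_of_monotone (μ := μ) L (S := S)
    (fun k l hkl x hx v hv ↦ hS (Nat.factorial_dvd_factorial hkl) (hx v hv)) hmeas
    fun k u hu x hx v hv ↦ by
      rw [vadd_vadd]
      exact hx _ (add_mem hv hu)
  refine ⟨m !, m.factorial_pos, ?_⟩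
  filter_upwards [h, hm] with x hx hmx hxA
  obtain ⟨k, hk, hkx⟩ := hx hxA
  exact hmx k fun v hv ↦ hS (Nat.dvd_factorial hk le_rfl) (hkx v hv)

variable {ι : Type*} [Fintype ι] [AddAction (ℤ × ℤ) X] [MeasurableConstVAdd (ℤ × ℤ) X]
  [ErgodicVAdd (ℤ × ℤ) X μ] [IsFiniteMeasure μ] {A : Set X} {ρ : ι → X → ℝ} {w : ι → ℤ × ℤ}

theorem exists_finiteIndex_ae_nsmul_coe_eq_zero (hA : NullMeasurableSet A μ) {i : ι}
    (hρ : Measurable (ρ i)) (hwi : w i ≠ 0)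
    (hdet : Pairwise fun i j ↦ planeDet (w i) (w j) ≠ 0)
    (hd : ∀ᵐ x ∂μ, IsPeriodicDecomposition ((· +ᵥ x) ⁻¹' A) (fun i v ↦ ρ i (v +ᵥ x)) w) :
    ∃ L : AddSubgroup (ℤ × ℤ), L.FiniteIndex ∧ ∃ m : ℕ, 0 < m ∧
      ∀ᵐ x ∂μ, x ∈ A → ∀ v ∈ L, m • (ρ i (v +ᵥ x) : UnitAddCircle) = 0 := by
  have hΛ := finiteIndex_pairwiseSpan hdet
  obtain ⟨u, hu⟩ := exists_forall_planeDet_ne_zero fun _ : Unit ↦ hwi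
  let z := (pairwiseSpan w).index • u
  have hz : z ∈ pairwiseSpan w := AddSubgroup.nsmul_index_mem _ u
  have hwz : planeDet (w i) z ≠ 0 := by
    simp only [z, ← natCast_zsmul u, planeDet_smul_right]
    exact mul_ne_zero (Nat.cast_ne_zero.2 hΛ.index_ne_zero) (hu ())
  have hL := finiteIndex_zmultiples_sup hwz
  refine ⟨_, hL, exists_pos_ae_forall_mem_nsmul_eq_zero _ (AddCircle.measurable_mk'.comp hρ) ?_⟩
  filter_upwards [hd, ae_mem_imp_frequently_nsmul_vadd_mem hA z,
    ae_mem_imp_frequently_nsmul_vadd_mem hA (-z)] with x hx hpos hneg hxA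
  exact hx.exists_nsmul_coe_eq_zero_of_frequently hz (hpos hxA) (hneg hxA) i

theorem exists_finiteIndex_ae_coe_eq_zero (hA : NullMeasurableSet A μ) {i : ι}
    (hρ : Measurable (ρ i)) (hwi : w i ≠ 0)
    (hdet : Pairwise fun i j ↦ planeDet (w i) (w j) ≠ 0)
    (hd : ∀ᵐ x ∂μ, IsPeriodicDecomposition ((· +ᵥ x) ⁻¹' A) (fun i v ↦ ρ i (v +ᵥ x)) w) :
    ∃ L : AddSubgroup (ℤ × ℤ), L.FiniteIndex ∧
      ∀ᵐ x ∂μ, x ∈ A → ∀ v ∈ L, (ρ i (v +ᵥ x) : UnitAddCircle) = 0 := by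
  have := finiteIndex_pairwiseSpan hdet
  obtain ⟨L, _, m, hm, hL⟩ := exists_finiteIndex_ae_nsmul_coe_eq_zero hA hρ hwi hdet hd
  refine ⟨_, finiteIndex_map_nsmul (L ⊓ pairwiseSpan w)
    (Nat.mul_pos hm (Fintype.card ι - 1).factorial_pos).ne', ?_⟩
  filter_upwards [hd, hL] with x hx hLx hxA
  rintro _ ⟨k, ⟨hkL, hk⟩, rfl⟩
  exact hx.coe_nsmul_eq_zero (by simpa using hxA) hk fun n ↦ hLx hxA _ (nsmul_mem hkL n)

theorem exists_finiteIndex_le_pairwiseSpan_ae_coe_eq_zero (hA : NullMeasurableSet A μ)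
    (hρ : ∀ i, Measurable (ρ i)) (hw : ∀ i, w i ≠ 0)
    (hdet : Pairwise fun i j ↦ planeDet (w i) (w j) ≠ 0)
    (hd : ∀ᵐ x ∂μ, IsPeriodicDecomposition ((· +ᵥ x) ⁻¹' A) (fun i v ↦ ρ i (v +ᵥ x)) w) :
    ∃ H : AddSubgroup (ℤ × ℤ), H.FiniteIndex ∧ H ≤ pairwiseSpan w ∧
      ∀ᵐ x ∂μ, x ∈ A → ∀ i, ∀ v ∈ H, (ρ i (v +ᵥ x) : UnitAddCircle) = 0 := by
  choose L hLfin hL using fun i ↦ exists_finiteIndex_ae_coe_eq_zero hA (hρ i) (hw i) hdet hd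
  have := finiteIndex_pairwiseSpan hdet
  have := AddSubgroup.finiteIndex_iInf hLfin
  refine ⟨pairwiseSpan w ⊓ ⨅ i, L i, inferInstance, inf_le_left, ?_⟩
  filter_upwards [ae_all_iff.2 hL] with x hx hxA i v hv
  exact hx i hxA v (AddSubgroup.mem_iInf.1 hv.2 i)

end Integrality

section Pieces

variable {X G ι : Type*} [AddCommGroup G] [AddAction G X]

/-- The set of indices `i` such that `ρ i` takes the value `1` somewhere on the `H`-orbit of `x`.
The pieces of the partition are the sets of points of `A` with a given such set of indices. -/
def orbitOneSet (H : AddSubgroup G) (ρ : ι → X → ℝ) (x : X) : Set ι :=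
  {i | ∃ v ∈ H, ρ i (v +ᵥ x) = 1}

theorem orbitOneSet_vadd {H : AddSubgroup G} {h : G} (hh : h ∈ H) (ρ : ι → X → ℝ) (x : X) :
    orbitOneSet H ρ (h +ᵥ x) = orbitOneSet H ρ x := by
  ext i
  constructor
  · rintro ⟨v, hv, hi⟩
    exact ⟨v + h, add_mem hv hh, by rwa [← vadd_vadd]⟩
  · rintro ⟨v, hv, hi⟩
    exact ⟨v - h, sub_mem hv hh, by rwa [vadd_vadd, sub_add_cancel]⟩

theorem measurable_orbitOneSet [MeasurableSpace X] [Countable G] [MeasurableConstVAdd G X]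
    (H : AddSubgroup G) {ρ : ι → X → ℝ} (hρ : ∀ i, Measurable (ρ i)) :
    Measurable (orbitOneSet H ρ) := by
  refine measurable_set_iff.2 fun i ↦ ?_
  simp only [orbitOneSet, Set.mem_ofPred_eq]
  refine .exists fun v ↦ measurable_const.and (measurableSet_setOfPred.1 ?_)
  exact ((hρ i).comp (measurable_const_vadd v)) (measurableSet_singleton 1)

variable [Fintype ι] {A : Set X} {ρ : ι → X → ℝ} {w : ι → G} {H : AddSubgroup G}

theorem exists_mem_forall_vadd_mem_of_orbitOneSet_eq [H.FiniteIndex] [IsAddTorsionFree G]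
    [Nontrivial G] (hw : ∀ i, w i ≠ 0) (hH : H ≤ pairwiseSpan w) (s : Set ι) :
    ∃ h ∈ H, h ≠ 0 ∧ ∀ x ∈ A,
      IsPeriodicDecomposition ((· +ᵥ x) ⁻¹' A) (fun i v ↦ ρ i (v +ᵥ x)) w →
      (∀ i, ∀ v ∈ H, (ρ i (v +ᵥ x) : UnitAddCircle) = 0) → orbitOneSet H ρ x = s →
      h +ᵥ x ∈ A := by
  have hne {y : G} (hy : y ≠ 0) : H.index • y ≠ 0 :=
    (smul_ne_zero_iff_right AddSubgroup.FiniteIndex.index_ne_zero).2 hy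
  rcases s.eq_empty_or_nonempty with rfl | ⟨i, hi⟩
  · obtain ⟨y, hy⟩ := exists_ne (0 : G)
    refine ⟨_, H.nsmul_index_mem y, hne hy, fun x _ hd hcoe hx ↦ ?_⟩
    exact hd.mem_of_forall_ne_one (hcoe · _ (H.nsmul_index_mem y)) fun i hi ↦
      (Set.eq_empty_iff_forall_notMem.1 hx) i ⟨_, H.nsmul_index_mem y, hi⟩
  · refine ⟨_, H.nsmul_index_mem (w i), hne (hw i), fun x hxA hd hcoe hx ↦ ?_⟩
    obtain ⟨v, hv, hvi⟩ : i ∈ orbitOneSet H ρ x := hx ▸ hi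
    exact hd.mem_of_eq_one (by simpa using hxA) (hcoe · _ (H.nsmul_index_mem (w i)))
      (nsmul_mem (AddSubgroup.mem_zmultiples _) _) hvi
      (hH (sub_mem hv (H.nsmul_index_mem (w i))))

theorem exists_measurable_forall_preimage_vadd_ae_eq [MeasurableSpace X] {μ : Measure X}
    [Countable G] [MeasurableConstVAdd G X] [VAddInvariantMeasure G X μ] [IsFiniteMeasure μ]
    [IsAddTorsionFree G] [Nontrivial G] [H.FiniteIndex] (hA : MeasurableSet A)
    (hρ : ∀ i, Measurable (ρ i)) (hw : ∀ i, w i ≠ 0) (hH : H ≤ pairwiseSpan w)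
    (hd : ∀ᵐ x ∂μ, IsPeriodicDecomposition ((· +ᵥ x) ⁻¹' A) (fun i v ↦ ρ i (v +ᵥ x)) w)
    (hcoe : ∀ᵐ x ∂μ, x ∈ A → ∀ i, ∀ v ∈ H, (ρ i (v +ᵥ x) : UnitAddCircle) = 0) :
    ∃ (m : ℕ) (p : X → Fin m), Measurable p ∧
      ∀ l, ∃ h : G, h ≠ 0 ∧ (h +ᵥ ·) ⁻¹' (A ∩ p ⁻¹' {l}) =ᵐ[μ] (A ∩ p ⁻¹' {l} : Set X) := by
  let e := Finite.equivFin (Set ι)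
  have hp : Measurable (e ∘ orbitOneSet H ρ) :=
    (Measurable.of_discrete (f := e)).comp (measurable_orbitOneSet H hρ)
  refine ⟨_, e ∘ orbitOneSet H ρ, hp, fun l ↦ ?_⟩
  obtain ⟨h, hh, hne, hmem⟩ :=
    exists_mem_forall_vadd_mem_of_orbitOneSet_eq (A := A) hw hH (e.symm l)
  refine ⟨h, hne, preimage_vadd_ae_eq_of_forall_mem_imp
    (hA.inter (hp (measurableSet_singleton l))).nullMeasurableSet ?_⟩
  filter_upwards [hd, hcoe] with x hdx hcoex
  rintro ⟨hxA, hxl⟩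
  refine ⟨hmem x hxA hdx (hcoex hxA) (e.eq_symm_apply.2 hxl), ?_⟩
  rw [Set.mem_preimage, comp_apply, orbitOneSet_vadd hh]
  exact hxl

end Pieces

open scoped Pointwise in
theorem ae_isTiling_preimage_vadd {X G ι : Type*} [MeasurableSpace X] {μ : Measure X}
    [AddCommGroup G] [Countable G] [AddAction G X] [MeasurableConstVAdd G X]
    [VAddInvariantMeasure G X μ] [Countable ι] {A : Set X} {g : ι → G}
    (hdisj : Pairwise (AEDisjoint μ on fun i ↦ g i +ᵥ A))
    (hcov : (⋃ i, g i +ᵥ A) =ᵐ[μ] (Set.univ : Set X)) :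
    ∀ᵐ x ∂μ, IsTiling ((· +ᵥ x) ⁻¹' A) (-g) := by
  have hunique : ∀ᵐ x ∂μ, ∃! i, -g i +ᵥ x ∈ A := by
    have hdisj_ae : ∀ᵐ x ∂μ, ∀ i j, i ≠ j → x ∉ (g i +ᵥ A) ∩ (g j +ᵥ A) := by
      simp only [ae_all_iff]
      exact fun i j hij ↦ measure_eq_zero_iff_ae_notMem.1 (hdisj hij)
    filter_upwards [hdisj_ae, eventuallyEq_univ.1 hcov] with x hx hxcov
    obtain ⟨i, hi⟩ := Set.mem_iUnion.1 hxcov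
    refine ⟨i, Set.mem_vadd_set_iff_neg_vadd_mem.1 hi, fun j hj ↦ ?_⟩
    by_contra hji
    exact hx j i hji ⟨Set.mem_vadd_set_iff_neg_vadd_mem.2 hj, hi⟩
  filter_upwards [ae_forall_vadd (G := G) hunique] with x hx v
  simpa only [Set.mem_preimage, Pi.neg_apply, add_comm v, vadd_vadd] using hx v

theorem exists_measurable_forall_preimage_vadd_ae_eq_of_isTiling {X ι : Type*} [MeasurableSpace X]
    {μ : Measure X} [IsFiniteMeasure μ] [NeZero μ] [AddAction (ℤ × ℤ) X]
    [MeasurableConstVAdd (ℤ × ℤ) X] [ErgodicVAdd (ℤ × ℤ) X μ] [Finite ι] {A : Set X}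
    (hA : MeasurableSet A) {f : ι → ℤ × ℤ} (hf : ∀ᵐ x ∂μ, IsTiling ((· +ᵥ x) ⁻¹' A) f) :
    ∃ (m : ℕ) (p : X → Fin m), Measurable p ∧
      ∀ l, ∃ h : ℤ × ℤ, h ≠ 0 ∧ (h +ᵥ ·) ⁻¹' (A ∩ p ⁻¹' {l}) =ᵐ[μ] (A ∩ p ⁻¹' {l} : Set X) := by
  classical
  have := Fintype.ofFinite ι
  obtain ⟨x, hx⟩ := hf.exists
  obtain ⟨i₀, -⟩ := hx 0
  obtain ⟨ρ, hρ, hd⟩ := exists_isPeriodicDecomposition hA (i₀ := i₀)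
    (hf.mono fun x hx ↦ hx.add_const (-f i₀)) (add_neg_cancel _)
  obtain ⟨s, ρ, hs, hdet, hρ, hd⟩ := exists_isPeriodicDecomposition_pairwise_planeDet_ne_zero
    (fun i ↦ smul_ne_zero (Fintype.card ι).factorial_ne_zero
      (add_neg_eq_zero.not.2 (hx.injective.ne i.2))) hρ hd
  obtain ⟨H, _, hH, hcoe⟩ := exists_finiteIndex_le_pairwiseSpan_ae_coe_eq_zero
    hA.nullMeasurableSet hρ hs hdet hd
  exact exists_measurable_forall_preimage_vadd_ae_eq hA hρ hs hH hd hcoe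

/-- **Theorem 1.3.** Let `(X, μ)` be a probability space with an ergodic
measure-preserving action `T` of `ℤ²`, and let `A ⊆ X` be a measurable set such that
the sets `g₁A, …, gₙA` form a partition of `X` up to `μ`-null sets. Then `A` admits a
finite partition `(A₁, …, A_m)` into measurable sets, each of which is invariant (up
to `μ`-null sets) under the action of some nonzero element of `ℤ²`. -/
theorem partition_into_onePeriodic_pieces
    {X : Type*} [MeasurableSpace X] (μ : Measure X) [IsProbabilityMeasure μ]
    (T : ℤ × ℤ → X → X)
    (hmp : ∀ g, MeasurePreserving (T g) μ μ)
    (hT0 : T 0 = id)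
    (hTadd : ∀ g h : ℤ × ℤ, T (g + h) = T g ∘ T h)
    (herg : ∀ S : Set X, MeasurableSet S → (∀ g : ℤ × ℤ, T g ⁻¹' S =ᵐ[μ] S) →
      μ S = 0 ∨ μ S = 1)
    (A : Set X) (hA : MeasurableSet A)
    (n : ℕ) (g : Fin n → ℤ × ℤ)
    (hdisj : ∀ i j, i ≠ j → μ (T (g i) '' A ∩ T (g j) '' A) = 0)
    (hcov : (⋃ i, T (g i) '' A) =ᵐ[μ] (Set.univ : Set X)) :
    ∃ (m : ℕ) (As : Fin m → Set X),
      (∀ i, MeasurableSet (As i)) ∧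
      (∀ i j, i ≠ j → Disjoint (As i) (As j)) ∧
      (⋃ i, As i) = A ∧
      ∀ i, ∃ h : ℤ × ℤ, h ≠ 0 ∧ T h '' As i =ᵐ[μ] As i := by
  let : AddAction (ℤ × ℤ) X :=
    { vadd := T, zero_vadd := congrFun hT0, add_vadd := fun g h ↦ congrFun (hTadd g h) }
  have : MeasurableConstVAdd (ℤ × ℤ) X := ⟨fun g ↦ (hmp g).measurable⟩
  have : ErgodicVAdd (ℤ × ℤ) X μ :=
    { measure_preimage_vadd := fun g _ hS ↦ (hmp g).measure_preimage hS.nullMeasurableSet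
      aeconst_of_forall_preimage_vadd_ae_eq := fun {S} hS hinv ↦ eventuallyConst_set'.2 <|
        (herg S hS hinv).imp ae_eq_empty.2 fun h1 ↦
          eventuallyEq_univ.2 ((prob_compl_eq_zero_iff hS).2 h1) }
  obtain ⟨m, p, hp, hper⟩ := exists_measurable_forall_preimage_vadd_ae_eq_of_isTiling hA
    (ae_isTiling_preimage_vadd hdisj hcov)
  refine ⟨m, fun l ↦ A ∩ p ⁻¹' {l}, fun l ↦ hA.inter (hp (measurableSet_singleton l)),
    fun i j hij ↦ ?_, ?_, fun l ↦ ?_⟩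
  · exact ((Set.disjoint_singleton.2 hij).preimage p).mono Set.inter_subset_right
      Set.inter_subset_right
  · rw [← Set.inter_iUnion, ← Set.preimage_iUnion, Set.iUnion_of_singleton, Set.preimage_univ,
      Set.inter_univ]
  · obtain ⟨h, hne, hh⟩ := hper l
    exact ⟨-h, neg_ne_zero.2 hne, by rwa [Set.preimage_vadd] at hh⟩
end

section
/- Suppose (E₁, …, E_m) is a partition of ℤ² and h₁, …, h_m are nonzero elements of ℤ² such that E_i + h_i = E_i for all i. If no two of the h_i are proportional to each other (i.e., there are no i ≠ j and nonzero integers a, b with a·h_i = b·h_j), then each E_i is a periodic set. -/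
/-- Two elements `g, h ∈ ℤ²` are proportional if `a • g = b • h` for some nonzero
integers `a, b`. -/
def Proportional (g h : ℤ × ℤ) : Prop :=
  ∃ a b : ℤ, a ≠ 0 ∧ b ≠ 0 ∧ a • g = b • h

/-- A set `E ⊆ ℤ²` is periodic if `E + Λ = E` for some finite index subgroup `Λ ⊆ ℤ²`. -/
def IsPeriodicSet (E : Set (ℤ × ℤ)) : Prop :=
  ∃ Λ : AddSubgroup (ℤ × ℤ), Λ.FiniteIndex ∧ ∀ h ∈ Λ, ∀ x : ℤ × ℤ, x + h ∈ E ↔ x ∈ E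

/-!
The indicator functions `f j` of the `E j` add up to a constant. If `v = a • h j + b • h i`, then
applying the difference operator of `a • h j` to this relation kills `f j`, while on the
`h i`-periodic function `f i` it acts as the difference operator of `v`. So if `v` lies in every
subgroup `⟨h i, h j⟩` with `j ≠ i`, the terms `f j` can be removed one at a time, and some iterated
`v`-difference of `f i` is `v`-periodic. A bounded function whose `v`-difference is `v`-periodic is
itself `v`-periodic, since otherwise it would grow linearly along some translate of `ℕ • v`; hence
`f i` is `v`-periodic. In `ℤ²` the subgroups `⟨h i, h j⟩` have finite index, and so does their
intersection.
-/

open Function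
open scoped fwdDiff

section Difference

variable {G M : Type*} [AddCommMonoid G] [AddCommGroup M] {f : G → M} {c v : G}

theorem periodic_fwdDiff (hf : Periodic f c) (u : G) : Periodic (Δ_[u] f) c :=
  (hf.add_const u).sub hf

theorem fwdDiff_eq_zero_iff_periodic : Δ_[c] f = 0 ↔ Periodic f c := by
  simp only [funext_iff, fwdDiff, Pi.zero_apply, sub_eq_zero, Periodic]

theorem fwdDiff_add_period (hf : Periodic f c) (u : G) : Δ_[u + c] f = Δ_[u] f := by
  funext x
  simp only [fwdDiff, ← add_assoc, hf (x + u)]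

theorem fwdDiff_nsmul_of_periodic_fwdDiff (hf : Periodic (Δ_[v] f) v) (n : ℕ) :
    Δ_[n • v] f = n • Δ_[v] f := by
  induction n with
  | zero => simp only [zero_nsmul, fwdDiff_eq_zero_iff_periodic, periodic_with_period_zero]
  | succ n ih =>
    funext x
    calc Δ_[(n + 1) • v] f x = Δ_[n • v] f x + Δ_[v] f (x + n • v) := by
          simp only [fwdDiff, succ_nsmul, add_assoc, sub_add_sub_cancel']
      _ = ((n + 1) • Δ_[v] f) x := by
          rw [ih, hf.nsmul n x, succ_nsmul, Pi.add_apply]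

end Difference

section Bounded

variable {M : Type*} [AddCommGroup M] [LinearOrder M] [IsOrderedAddMonoid M]

theorem eq_zero_of_forall_nsmul_abs_le [Archimedean M] {a C : M} (h : ∀ n : ℕ, n • |a| ≤ C) :
    a = 0 := by
  by_contra ha
  obtain ⟨n, hn⟩ := exists_lt_nsmul (abs_pos.mpr ha) C
  exact (h n).not_gt hn

theorem abs_fwdDiff_le {G : Type*} [AddCommMonoid G] {f : G → M} {C : M} (hC : ∀ x, |f x| ≤ C)
    (u x : G) : |Δ_[u] f x| ≤ C + C :=
  (abs_sub _ _).trans (add_le_add (hC _) (hC _))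

theorem periodic_of_periodic_fwdDiff [Archimedean M] {G : Type*} [AddCommMonoid G] {f : G → M}
    {C : M} {v : G} (hC : ∀ x, |f x| ≤ C) (hf : Periodic (Δ_[v] f) v) : Periodic f v := by
  refine fwdDiff_eq_zero_iff_periodic.mp (funext fun x ↦ ?_)
  refine eq_zero_of_forall_nsmul_abs_le (C := C + C) fun n ↦ ?_
  calc n • |Δ_[v] f x| = |Δ_[n • v] f x| := by
        rw [fwdDiff_nsmul_of_periodic_fwdDiff hf, Pi.smul_apply, abs_nsmul]
    _ ≤ C + C := abs_fwdDiff_le hC _ x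

theorem periodic_of_periodic_add_sum [Archimedean M] {G ι : Type*} [AddCommGroup G]
    (s : Finset ι) {f : G → M} {g : ι → G → M} {C : M} {c v : G} {h : ι → G}
    (hC : ∀ x, |f x| ≤ C) (hf : Periodic f c) (hg : ∀ j ∈ s, Periodic (g j) (h j))
    (hv : ∀ j ∈ s, v ∈ AddSubgroup.closure {h j, c}) (hsum : Periodic (f + ∑ j ∈ s, g j) v) :
    Periodic f v := by
  induction s using Finset.cons_induction generalizing f g C with
  | empty => simpa only [Finset.sum_empty, add_zero] using hsum
  | cons j s hj ih =>
    rw [Finset.forall_mem_cons] at hg hv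
    obtain ⟨a, b, rfl⟩ := AddSubgroup.mem_closure_pair.mp hv.1
    have hΔf : Δ_[a • h j + b • c] f = Δ_[a • h j] f := fwdDiff_add_period (hf.zsmul b) _
    have hΔg : Δ_[a • h j] (g j) = 0 := fwdDiff_eq_zero_iff_periodic.mpr (hg.1.zsmul a)
    have hΔsum : Δ_[a • h j] (f + ∑ k ∈ s.cons j hj, g k)
        = Δ_[a • h j] f + ∑ k ∈ s, Δ_[a • h j] (g k) := by
      rw [fwdDiff_add, fwdDiff_finsetSum, Finset.sum_cons, hΔg, zero_add]
    refine periodic_of_periodic_fwdDiff hC ?_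
    rw [hΔf]
    exact ih (abs_fwdDiff_le hC _) (periodic_fwdDiff hf _)
      (fun k hk ↦ periodic_fwdDiff (hg.2 k hk) (a • h j)) hv.2 (hΔsum ▸ periodic_fwdDiff hsum _)

end Bounded

theorem finiteIndex_of_forall_zsmul_mem {G : Type*} [AddCommGroup G] [AddGroup.FG G]
    {Λ : AddSubgroup G} {n : ℤ} (hn : n ≠ 0) (h : ∀ x, n • x ∈ Λ) : Λ.FiniteIndex := by
  have htorsion : IsAddTorsion (G ⧸ Λ) := by
    rintro ⟨x⟩
    exact isOfFinAddOrder_iff_zsmul_eq_zero.mpr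
      ⟨n, hn, (QuotientAddGroup.eq_zero_iff (n • x)).mpr (h x)⟩
  have : Finite (G ⧸ Λ) := AddCommGroup.finite_of_fg_isAddTorsion _ htorsion
  exact AddSubgroup.finiteIndex_of_finite_quotient

theorem det_smul_mem_closure_pair (g h x : ℤ × ℤ) :
    (g.1 * h.2 - g.2 * h.1) • x ∈ AddSubgroup.closure {g, h} := by
  -- Cramer's rule
  refine AddSubgroup.mem_closure_pair.mpr
    ⟨x.1 * h.2 - x.2 * h.1, g.1 * x.2 - g.2 * x.1, Prod.ext ?_ ?_⟩ <;>
  · simp only [Prod.fst_add, Prod.snd_add, Prod.smul_fst, Prod.smul_snd, smul_eq_mul]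
    ring

theorem det_ne_zero_of_not_proportional {g h : ℤ × ℤ} (hg : g ≠ 0) (hh : h ≠ 0)
    (hgh : ¬ Proportional g h) : g.1 * h.2 - g.2 * h.1 ≠ 0 := by
  intro hdet
  have hfst : h.1 • g = g.1 • h := by
    ext <;> simp only [Prod.smul_fst, Prod.smul_snd, smul_eq_mul] <;> linarith
  have hsnd : h.2 • g = g.2 • h := by
    ext <;> simp only [Prod.smul_fst, Prod.smul_snd, smul_eq_mul] <;> linarith
  have hfst_zero : h.1 = 0 ∨ g.1 = 0 := by
    by_contra! hne
    exact hgh ⟨h.1, g.1, hne.1, hne.2, hfst⟩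
  have hsnd_zero : h.2 = 0 ∨ g.2 = 0 := by
    by_contra! hne
    exact hgh ⟨h.2, g.2, hne.1, hne.2, hsnd⟩
  rw [Ne, Prod.ext_iff, Prod.fst_zero, Prod.snd_zero] at hg hh
  rcases hfst_zero with h₁ | h₁ <;> rcases hsnd_zero with h₂ | h₂ <;> simp_all

theorem finiteIndex_closure_pair_of_not_proportional {g h : ℤ × ℤ} (hg : g ≠ 0) (hh : h ≠ 0)
    (hgh : ¬ Proportional g h) : (AddSubgroup.closure {g, h}).FiniteIndex :=
  finiteIndex_of_forall_zsmul_mem (det_ne_zero_of_not_proportional hg hh hgh)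
    (det_smul_mem_closure_pair g h)

theorem periodic_indicator_one_iff {G R : Type*} [Add G] [Zero R] [One R] [NeZero (1 : R)]
    {E : Set G} {v : G} :
    Periodic (E.indicator (1 : G → R)) v ↔ ∀ x, x + v ∈ E ↔ x ∈ E := by
  refine forall_congr' fun x ↦ ?_
  by_cases hv : x + v ∈ E <;> by_cases hx : x ∈ E <;> simp [hv, hx]

theorem sum_indicator_one_eq_ncard {α ι R : Type*} [Fintype ι] [NonAssocSemiring R]
    (E : ι → Set α) (x : α) :
    ∑ j, (E j).indicator (1 : α → R) x = {j | x ∈ E j}.ncard := by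
  classical
  simp only [Set.indicator_apply, Pi.one_apply, Finset.sum_boole, Set.ncard_eq_toFinset_card',
    Set.toFinset_ofPred]

theorem ncard_setOf_mem_eq_one_of_partition {α ι : Type*} {E : ι → Set α}
    (hdisj : ∀ i j, i ≠ j → Disjoint (E i) (E j)) (hcov : ⋃ i, E i = Set.univ) (x : α) :
    {j | x ∈ E j}.ncard = 1 := by
  obtain ⟨i, hi⟩ := Set.iUnion_eq_univ_iff.mp hcov x
  refine Set.ncard_eq_one.mpr ⟨i, Set.eq_singleton_iff_unique_mem.mpr ⟨hi, fun j hj ↦ ?_⟩⟩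
  by_contra hji
  exact Set.disjoint_left.mp (hdisj j i hji) hj hi

theorem add_mem_iff_of_forall_mem_closure_pair {G ι : Type*} [AddCommGroup G] [Finite ι]
    {E : ι → Set G} {h : ι → G} {k : ℕ} (hcard : ∀ x, {j | x ∈ E j}.ncard = k)
    (hinv : ∀ j x, x + h j ∈ E j ↔ x ∈ E j) {i : ι} {v : G}
    (hv : ∀ j ≠ i, v ∈ AddSubgroup.closure {h j, h i}) (x : G) : x + v ∈ E i ↔ x ∈ E i := by
  classical
  have := Fintype.ofFinite ι
  let f (j : ι) : G → ℤ := (E j).indicator 1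
  have hf (j : ι) : Periodic (f j) (h j) := periodic_indicator_one_iff.mpr (hinv j)
  have hbound (x : G) : |f i x| ≤ 1 := by
    by_cases hx : x ∈ E i <;> simp [f, hx]
  have hsum : f i + ∑ j ∈ Finset.univ.erase i, f j = fun _ ↦ (k : ℤ) := by
    rw [Finset.add_sum_erase _ _ (Finset.mem_univ i)]
    funext x
    rw [Finset.sum_apply, sum_indicator_one_eq_ncard, hcard]
  refine periodic_indicator_one_iff.mp (periodic_of_periodic_add_sum (Finset.univ.erase i) hbound
    (hf i) (fun j _ ↦ hf j) (fun j hj ↦ hv j (Finset.ne_of_mem_erase hj)) ?_) x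
  exact hsum ▸ fun _ ↦ rfl

theorem periodic_of_partition_invariants_general {G ι : Type*} [AddCommGroup G] [Finite ι]
    (E : ι → Set G) (h : ι → G) {k : ℕ} (hcard : ∀ x, {j | x ∈ E j}.ncard = k)
    (hinv : ∀ j x, x + h j ∈ E j ↔ x ∈ E j) (i : ι)
    (hindex : ∀ j ≠ i, (AddSubgroup.closure {h j, h i}).FiniteIndex) :
    ∃ Λ : AddSubgroup G, Λ.FiniteIndex ∧ ∀ v ∈ Λ, ∀ x, x + v ∈ E i ↔ x ∈ E i := by
  refine ⟨⨅ j : {j // j ≠ i}, AddSubgroup.closure {h j, h i}, ?_, fun v hv ↦ ?_⟩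
  · exact AddSubgroup.finiteIndex_iInf fun j ↦ hindex j j.2
  · rw [AddSubgroup.mem_iInf] at hv
    exact add_mem_iff_of_forall_mem_closure_pair hcard hinv fun j hj ↦ hv ⟨j, hj⟩

/-- If `(E₁, …, E_m)` is a partition of `ℤ²` and `h₁, …, h_m` are nonzero elements of
`ℤ²` with `E_i + h_i = E_i` for all `i`, and no two of the `h_i` are proportional to
each other, then each `E_i` is a periodic set. -/
theorem periodic_of_partition_invariants (m : ℕ)
    (E : Fin m → Set (ℤ × ℤ)) (h : Fin m → ℤ × ℤ)
    (hdisj : ∀ i j, i ≠ j → Disjoint (E i) (E j))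
    (hcov : (⋃ i, E i) = Set.univ)
    (hne : ∀ i, h i ≠ 0)
    (hinv : ∀ i, ∀ x : ℤ × ℤ, x + h i ∈ E i ↔ x ∈ E i)
    (hprop : ∀ i j, i ≠ j → ¬ Proportional (h i) (h j)) :
    ∀ i, IsPeriodicSet (E i) := fun i ↦
  periodic_of_partition_invariants_general E h (ncard_setOf_mem_eq_one_of_partition hdisj hcov)
    hinv i fun j hji ↦ finiteIndex_closure_pair_of_not_proportional (hne j) (hne i) (hprop j i hji)
end
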